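/- arXiv:1504.04250 — 8 statements merged into one kernel-verified Lean document; each statement's English description precedes it below -/
import Mathlib

section
/- Let p ∈ (1,∞) and let T = (V,E,w) be a weighted tree whose combinatorial diameter cdiam(T) (the diameter of T in the metric obtained by giving every edge weight 1) is finite and at least 1. Then c_{ℓ^p(E)}(T) ≤ 96·(6·ln(2·cdiam(T)))^{1/p}. -/
open Set Function Filter

open scoped ENNReal

attribute [local instance] Classical.propDecidable

noncomputable section

def LipUB {α β : Type*} (dα : α → α → ℝ) (dβ : β → β → ℝ) (f : α → β) (L : ℝ) : Prop :=
  ∀ a b : α, dβ (f a) (f b) ≤ L * dα a b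

def CoLipUB {α β : Type*} (dα : α → α → ℝ) (dβ : β → β → ℝ) (f : α → β) (C : ℝ) : Prop :=
  ∀ a b : α, dα a b ≤ C * dβ (f a) (f b)

def IsBiLipEmb {α β : Type*} (dα : α → α → ℝ) (dβ : β → β → ℝ) (f : α → β) : Prop :=
  Function.Injective f ∧ ∃ L C : ℝ, LipUB dα dβ f L ∧ CoLipUB dα dβ f C

def distortionSet (α β : Type*) (dα : α → α → ℝ) (dβ : β → β → ℝ) : Set ℝ :=
  {D | ∃ f : α → β, Function.Injective f ∧ ∃ L C : ℝ,
    LipUB dα dβ f L ∧ CoLipUB dα dβ f C ∧ D = L * C}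

def cDist (α β : Type*) (dα : α → α → ℝ) (dβ : β → β → ℝ) : ℝ≥0∞ :=
  ⨅ D ∈ distortionSet α β dα dβ, ENNReal.ofReal D
structure RootedWTree (V : Type*) where
  root : V
  parent : V → V
  w : V → ℝ
  parent_root : parent root = root
  reach : ∀ v : V, ∃ n : ℕ, parent^[n] v = root
  w_pos : ∀ v : V, v ≠ root → 0 < w v

namespace RootedWTree

variable {V : Type*} (T : RootedWTree V)

def up (v : V) (n : ℕ) : V := T.parent^[n] v

def Anc (u v : V) : Prop := ∃ n : ℕ, T.up v n = u

lemma exists_anc (x y : V) : ∃ n : ℕ, T.Anc (T.up x n) y := by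
  obtain ⟨n, hn⟩ := T.reach x
  obtain ⟨m, hm⟩ := T.reach y
  exact ⟨n, m, by simp only [up]; rw [hm, hn]⟩

def climb (x y : V) : ℕ := Nat.find (T.exists_anc x y)

def rho (x y : V) : ℝ :=
  (∑ k ∈ Finset.range (T.climb x y), T.w (T.up x k)) +
  (∑ k ∈ Finset.range (T.climb y x), T.w (T.up y k))

def pathEdges (x y : V) : List V :=
  ((List.range (T.climb x y)).map (fun k => T.up x k)) ++
  ((List.range (T.climb y x)).map (fun k => T.up y k))

def MonotoneClass {C : Type*} (χ : V → C) (c : C) : Prop :=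
  (∀ u v : V, u ≠ T.root → v ≠ T.root → χ u = c → χ v = c → T.Anc u v ∨ T.Anc v u) ∧
  (∀ (v : V) (n : ℕ), v ≠ T.root → χ v = c → T.up v n ≠ T.root → χ (T.up v n) = c →
    ∀ k ≤ n, χ (T.up v k) = c)

def IsMonotoneColoring {C : Type*} (χ : V → C) : Prop := ∀ c : C, T.MonotoneClass χ c

def IsBranch (P : Set V) : Prop := IsMaxChain (fun u v => T.Anc u v) P

def IsCaterpillar {C : Type*} (χ : V → C) (κ : ℕ) : Prop :=
  T.IsMonotoneColoring χ ∧
  ∀ P : Set V, T.IsBranch P → ∃ s : Finset C, s.card ≤ κ ∧ ∀ v ∈ P, v ≠ T.root → χ v ∈ s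

def colorLen {C : Type*} (χ : V → C) (c : C) (x y : V) : ℝ :=
  (((T.pathEdges x y).filter (fun e => decide (χ e = c))).map T.w).sum

def IsStrong {C : Type*} (χ : V → C) (δ : ℝ) : Prop :=
  T.IsMonotoneColoring χ ∧
  ∀ x y : V, x ≠ y →
    T.rho x y / 2 ≤
      (((T.pathEdges x y).filter
        (fun e => decide (δ * T.rho x y ≤ T.colorLen χ (χ e) x y))).map T.w).sum

end RootedWTree

section Analytic

lemma aux_lower (a : ℕ → ℝ) (p : ℝ) (hp : 1 < p) (n : ℕ) (ha : ∀ k < n, 0 < a k) :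
    (∑ j ∈ Finset.range n, a j) ^ p / p ≤
      ∑ k ∈ Finset.range n, a k * (∑ j ∈ Finset.range (k + 1), a j) ^ (p - 1) := by
  induction n with
  | zero => simp [Real.zero_rpow (by linarith : p ≠ 0)]
  | succ n ih =>
    rw [Finset.sum_range_succ (fun k => a k * _)]
    have ih' := ih (fun k hk => ha k (by omega))
    have h0 : 0 ≤ ∑ j ∈ Finset.range n, a j :=
      Finset.sum_nonneg fun k hk => (ha k (by have := Finset.mem_range.1 hk; omega)).le
    have han := ha n (by omega)
    set t := ∑ j ∈ Finset.range n, a j with ht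
    have hS : ∑ j ∈ Finset.range (n + 1), a j = t + a n := Finset.sum_range_succ _ _
    rw [hS]
    set S := t + a n with hSd
    have hSpos : 0 < S := by linarith
    have hb := one_add_mul_self_le_rpow_one_add (s := -(a n / S))
      (by rw [neg_le_neg_iff, div_le_one hSpos]; linarith) hp.le
    have e1 : 1 + -(a n / S) = t / S := by field_simp; linarith
    rw [e1, Real.div_rpow h0 hSpos.le, le_div_iff₀ (Real.rpow_pos_of_pos hSpos _)] at hb
    have e2 : S ^ p = S ^ (p - 1) * S := by
      rw [← Real.rpow_add_one hSpos.ne']; ring_nf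
    have e3 : (1 + p * -(a n / S)) * S ^ p = S ^ p - p * (a n * S ^ (p - 1)) := by
      rw [e2]; field_simp; ring
    rw [e3] at hb
    have hp0 : 0 < p := by linarith
    have : S ^ p / p ≤ t ^ p / p + a n * S ^ (p - 1) := by
      rw [div_le_iff₀ hp0, add_mul, div_mul_cancel₀ _ hp0.ne']
      linarith
    linarith

lemma aux_s_ge (a : ℕ → ℝ) (Δ : ℕ) (k : ℕ) (hk : k + 1 ≤ Δ) (ha : ∀ j ≤ k, 0 < a j) :
    (∑ j ∈ Finset.range (k + 1), a j) / 2 ≤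
      ∑ j ∈ Finset.range (k + 1), max 0 (a j - a k / (2 * Δ)) := by
  have hΔ : (0 : ℝ) < Δ := by exact_mod_cast (by omega : 0 < Δ)
  have hk' : (k : ℝ) + 1 ≤ Δ := by exact_mod_cast hk
  have h1 : ∑ j ∈ Finset.range (k + 1), (a j - a k / (2 * Δ)) ≤
      ∑ j ∈ Finset.range (k + 1), max 0 (a j - a k / (2 * Δ)) :=
    Finset.sum_le_sum fun j _ => le_max_right _ _
  have h2 : a k ≤ ∑ j ∈ Finset.range (k + 1), a j :=
    Finset.single_le_sum (f := a)
      (fun j hj => (ha j (by have := Finset.mem_range.1 hj; omega)).le) (by simp)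
  rw [Finset.sum_sub_distrib] at h1
  simp only [Finset.sum_const, Finset.card_range, nsmul_eq_mul] at h1
  have h3 : ((k + 1 : ℕ) : ℝ) * (a k / (2 * Δ)) ≤ a k / 2 := by
    push_cast
    rw [mul_div_assoc', div_le_div_iff₀ (by positivity) (by norm_num)]
    nlinarith [ha k le_rfl]
  linarith

lemma aux_log (b : ℕ → ℝ) (hb0 : 0 < b 0) (hb : ∀ k, 0 ≤ b k) (n : ℕ) :
    ∑ k ∈ Finset.range (n + 1), b k / (∑ j ∈ Finset.range (k + 1), b j) ≤
      1 + Real.log ((∑ j ∈ Finset.range (n + 1), b j) / b 0) := by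
  induction n with
  | zero => simp [hb0.ne']
  | succ n ih =>
    rw [Finset.sum_range_succ (fun k => b k / _)]
    have hpos : 0 < ∑ j ∈ Finset.range (n + 1), b j :=
      lt_of_lt_of_le hb0 (Finset.single_le_sum (f := b) (fun j _ => hb j) (by simp))
    have hS := Finset.sum_range_succ b (n + 1)
    set B := ∑ j ∈ Finset.range (n + 1), b j
    set B' := ∑ j ∈ Finset.range (n + 1 + 1), b j
    have hbn := hb (n + 1)
    have hpos' : 0 < B' := by linarith
    have h := Real.one_sub_inv_le_log_of_pos (div_pos hpos' hpos)
    rw [Real.log_div hpos'.ne' hpos.ne'] at h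
    rw [Real.log_div hpos.ne' hb0.ne'] at ih
    rw [Real.log_div hpos'.ne' hb0.ne']
    have e : b (n + 1) / B' = 1 - (B' / B)⁻¹ := by
      rw [inv_div]; field_simp; linarith
    linarith

lemma aux_upper (a : ℕ → ℝ) (Δ : ℕ) (m : ℕ) (hm : m ≤ Δ) (hΔ : 1 ≤ Δ)
    (ha : ∀ j < m, 0 < a j) :
    ∑ k ∈ Finset.range m, (if a k < 2 * Δ * a 0 then
      a k / (∑ j ∈ Finset.range (k + 1), a j) else 0) ≤ 4 * Real.log (2 * Δ) := by
  have hΔ' : (1 : ℝ) ≤ Δ := by exact_mod_cast hΔ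
  have hl2 : Real.log 2 ≤ Real.log (2 * Δ) := Real.log_le_log (by norm_num) (by linarith)
  have hl := Real.log_two_gt_d9
  rcases m with _ | n
  · simp; linarith
  have ha0 := ha 0 (by omega)
  set b : ℕ → ℝ := fun k => if k < n + 1 ∧ a k < 2 * Δ * a 0 then a k else 0 with hbd
  have hb0 : b 0 = a 0 := by
    simp only [hbd]; rw [if_pos ⟨by omega, by nlinarith⟩]
  have hb : ∀ k, 0 ≤ b k := by
    intro k; simp only [hbd]; split_ifs with h
    · exact (ha k h.1).le
    · exact le_rfl
  have hba : ∀ k < n + 1, b k ≤ a k := by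
    intro k hk; simp only [hbd]; split_ifs with h
    · exact le_rfl
    · exact (ha k hk).le
  have hb2 : ∀ k, b k ≤ 2 * Δ * a 0 := by
    intro k; simp only [hbd]; split_ifs with h
    · exact h.2.le
    · positivity
  have h1 := aux_log b (hb0 ▸ ha0) hb n
  have hposB : ∀ k, 0 < ∑ j ∈ Finset.range (k + 1), b j := fun k =>
    lt_of_lt_of_le (hb0 ▸ ha0) (Finset.single_le_sum (f := b) (fun j _ => hb j) (by simp))
  have h2 : ∑ k ∈ Finset.range (n + 1), (if a k < 2 * Δ * a 0 then
      a k / (∑ j ∈ Finset.range (k + 1), a j) else 0) ≤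
      ∑ k ∈ Finset.range (n + 1), b k / (∑ j ∈ Finset.range (k + 1), b j) := by
    refine Finset.sum_le_sum fun k hk => ?_
    have hk' := Finset.mem_range.1 hk
    split_ifs with h
    · have : b k = a k := by simp only [hbd]; rw [if_pos ⟨hk', h⟩]
      rw [this]
      refine div_le_div_of_nonneg_left (ha k hk').le (hposB k) ?_
      exact Finset.sum_le_sum fun j hj => hba j (by have := Finset.mem_range.1 hj; omega)
    · exact div_nonneg (hb k) (hposB k).le
  have h3 : (∑ j ∈ Finset.range (n + 1), b j) / b 0 ≤ (2 * Δ) * Δ := by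
    rw [hb0, div_le_iff₀ ha0]
    have := Finset.sum_le_card_nsmul (Finset.range (n + 1)) b _ (fun k _ => hb2 k)
    simp only [Finset.card_range, nsmul_eq_mul] at this
    have hn : ((n + 1 : ℕ) : ℝ) ≤ Δ := by exact_mod_cast hm
    have h4 : ((n + 1 : ℕ) : ℝ) * (2 * Δ * a 0) ≤ Δ * (2 * Δ * a 0) :=
      mul_le_mul_of_nonneg_right hn (by positivity)
    linarith
  have h4 := Real.log_le_log (div_pos (hposB n) (hb0 ▸ ha0)) h3
  rw [Real.log_mul (by positivity) (by positivity)] at h4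
  rw [Real.log_mul (by norm_num) (by positivity)] at *
  linarith

/-- one-coordinate estimate -/
lemma aux_coord (a s t p : ℝ) (hp : 1 < p) (ha : 0 ≤ a) (ht : 0 ≤ t) (hts : t ≤ s) (hs : 0 < s) :
    |a ^ (1 / p) * s ^ (1 - 1 / p) - a ^ (1 / p) * t ^ (1 - 1 / p)| ^ p ≤
      (s - t) ^ p * (a / s) := by
  have hp0 : 0 < p := by linarith
  have hq : 0 < 1 - 1 / p := by
    rw [sub_pos, div_lt_one hp0]; exact hp
  have hmono : t ^ (1 - 1 / p) ≤ s ^ (1 - 1 / p) := Real.rpow_le_rpow ht hts hq.le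
  have hsm : s ^ (1 - 1 / p) = s * s ^ (-(1 / p)) := by
    rw [sub_eq_add_neg, Real.rpow_add hs, Real.rpow_one]
  have htm : t * s ^ (-(1 / p)) ≤ t ^ (1 - 1 / p) := by
    rcases ht.eq_or_lt with h | h
    · rw [← h, Real.zero_rpow hq.ne']; simp
    · have : t ^ (1 - 1 / p) = t * t ^ (-(1 / p)) := by
        rw [sub_eq_add_neg, Real.rpow_add h, Real.rpow_one]
      rw [this]
      exact mul_le_mul_of_nonneg_left
        (Real.rpow_le_rpow_of_nonpos h hts (by rw [neg_nonpos]; positivity)) ht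
  have hA : 0 ≤ a ^ (1 / p) := Real.rpow_nonneg ha _
  rw [← mul_sub, abs_of_nonneg (mul_nonneg hA (by linarith))]
  have h1 : a ^ (1 / p) * (s ^ (1 - 1 / p) - t ^ (1 - 1 / p)) ≤
      a ^ (1 / p) * ((s - t) * s ^ (-(1 / p))) :=
    mul_le_mul_of_nonneg_left (by rw [hsm, sub_mul]; linarith) hA
  refine (Real.rpow_le_rpow (mul_nonneg hA (by linarith)) h1 hp0.le).trans (le_of_eq ?_)
  have hst : 0 ≤ s - t := by linarith
  rw [Real.mul_rpow hA (by positivity), Real.mul_rpow hst (by positivity),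
    ← Real.rpow_mul ha, ← Real.rpow_mul hs.le]
  have e1 : 1 / p * p = 1 := by field_simp
  have e2 : -(1 / p) * p = -1 := by field_simp
  rw [e1, e2, Real.rpow_one, Real.rpow_neg_one]
  ring

end Analytic

namespace RootedWTree

variable {V : Type*} (T : RootedWTree V)

def dep (x : V) : ℕ := Nat.find (T.reach x)

lemma up_dep (x : V) : T.up x (T.dep x) = T.root := Nat.find_spec (T.reach x)

lemma up_ne {x : V} {k : ℕ} (h : k < T.dep x) : T.up x k ≠ T.root := Nat.find_min (T.reach x) h

lemma up_add (x : V) (m n : ℕ) : T.up x (m + n) = T.up (T.up x m) n := by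
  simp only [up]; rw [Nat.add_comm, Function.iterate_add_apply]

lemma up_root (n : ℕ) : T.up T.root n = T.root := by
  induction n with
  | zero => rfl
  | succ n ih => rw [up_add, ih]; exact T.parent_root

lemma up_ge {x : V} {k : ℕ} (h : T.dep x ≤ k) : T.up x k = T.root := by
  obtain ⟨d, rfl⟩ := Nat.exists_eq_add_of_le h
  rw [up_add, up_dep, up_root]

lemma lt_dep {x : V} {k : ℕ} (h : T.up x k ≠ T.root) : k < T.dep x := by
  by_contra h'; exact h (T.up_ge (not_lt.1 h'))

lemma dep_up {x : V} {k : ℕ} (h : k ≤ T.dep x) : T.dep (T.up x k) + k = T.dep x := by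
  have h1 : T.dep (T.up x k) ≤ T.dep x - k := by
    apply Nat.find_min'
    change T.up _ _ = _
    rw [← up_add, Nat.add_sub_cancel' h, up_dep]
  have h2 : T.dep x ≤ k + T.dep (T.up x k) := by
    apply Nat.find_min'
    change T.up _ _ = _
    rw [up_add, up_dep]
  omega

lemma up_inj {x : V} {j k : ℕ} (hj : j ≤ T.dep x) (hk : k ≤ T.dep x)
    (h : T.up x j = T.up x k) : j = k := by
  have h1 := T.dep_up hj
  have h2 := T.dep_up hk
  rw [h] at h1; omega

lemma climb_spec (x y : V) : T.Anc (T.up x (T.climb x y)) y := Nat.find_spec (T.exists_anc x y)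

lemma climb_min {x y : V} {k : ℕ} (h : k < T.climb x y) : ¬ T.Anc (T.up x k) y :=
  Nat.find_min (T.exists_anc x y) h

lemma climb_le {x y : V} {k : ℕ} (h : T.Anc (T.up x k) y) : T.climb x y ≤ k :=
  Nat.find_min' (T.exists_anc x y) h

lemma climb_le_dep (x y : V) : T.climb x y ≤ T.dep x :=
  T.climb_le ⟨T.dep y, by rw [up_dep, up_dep]⟩

lemma dep_eq_climb (x : V) : T.dep x = T.climb x T.root + T.climb T.root x := by
  have h1 : T.climb T.root x = 0 :=
    Nat.le_zero.1 (T.climb_le ⟨T.dep x, by rw [up_dep, up_root]⟩)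
  have h2 : T.climb x T.root = T.dep x := by
    refine le_antisymm (T.climb_le_dep _ _) ?_
    obtain ⟨n, hn⟩ := T.climb_spec x T.root
    rw [up_root] at hn
    by_contra h
    exact T.up_ne (not_le.1 h) hn.symm
  omega

lemma meet_eq (x y : V) : T.up x (T.climb x y) = T.up y (T.climb y x) := by
  obtain ⟨n, hn⟩ := T.climb_spec x y
  obtain ⟨k, hk⟩ := T.climb_spec y x
  have h1 : T.climb y x ≤ n := T.climb_le ⟨_, hn.symm⟩
  have h2 : T.climb x y ≤ k := T.climb_le ⟨_, hk.symm⟩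
  obtain ⟨d, hd⟩ := Nat.exists_eq_add_of_le h1
  obtain ⟨c, hc⟩ := Nat.exists_eq_add_of_le h2
  have h3 : T.up y (n + c) = T.up y (T.climb y x) := by
    rw [up_add, hn, ← up_add, ← hc, hk]
  by_cases hr : T.up y (T.climb y x) = T.root
  · rw [hr, ← hn, hd, up_add, hr, up_root]
  · have h4 := T.lt_dep hr
    have h5 := T.lt_dep (h3.symm ▸ hr : T.up y (n + c) ≠ T.root)
    have h6 := T.up_inj h5.le h4.le h3
    have : n = T.climb y x := by omega
    rw [← hn, this]

def lev (x e : V) : ℕ := if h : ∃ k, T.up x k = e then Nat.find h + 1 else 0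

lemma lev_up {x : V} {k : ℕ} (h : k < T.dep x) : T.lev x (T.up x k) = k + 1 := by
  have hex : ∃ j, T.up x j = T.up x k := ⟨k, rfl⟩
  rw [lev, dif_pos hex]
  have h1 : Nat.find hex ≤ k := Nat.find_min' hex rfl
  have h2 := T.up_inj (by omega) h.le (Nat.find_spec hex)
  omega

lemma lev_not {x e : V} (h : ¬ T.Anc e x) : T.lev x e = 0 := by
  rw [lev, dif_neg]; exact h

lemma lev_parent {x : V} {k : ℕ} (h : k < T.dep x) : T.lev (T.up x 1) (T.up x k) = k := by
  have hd := T.dep_up (x := x) (k := 1) (by omega)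
  rcases k with _ | k
  · refine T.lev_not ?_
    rintro ⟨n, hn⟩
    rw [← up_add] at hn
    have hne := T.up_ne h
    have h1 := T.lt_dep (hn.symm ▸ hne : T.up x (1 + n) ≠ T.root)
    have := T.up_inj h1.le h.le hn
    omega
  · rw [Nat.add_comm k 1, up_add, T.lev_up (by omega)]; omega

def sval (Δ : ℕ) (x e : V) : ℝ :=
  ∑ j ∈ Finset.range (T.lev x e), max 0 (T.w (T.up x j) - T.w e / (2 * Δ))

def gval (p : ℝ) (Δ : ℕ) (x e : V) : ℝ :=
  T.w e ^ (1 / p) * T.sval Δ x e ^ (1 - 1 / p)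

lemma gval_not {p : ℝ} (hp : 1 < p) (Δ : ℕ) {x e : V} (h : ¬ T.Anc e x) :
    T.gval p Δ x e = 0 := by
  have hq : 1 - 1 / p ≠ 0 := by
    have : 1 / p < 1 := by rw [div_lt_one (by linarith)]; exact hp
    linarith
  rw [gval, sval, T.lev_not h]
  rw [Finset.range_zero, Finset.sum_empty, Real.zero_rpow hq, mul_zero]

def edge (x : V) (k : Fin (T.dep x)) : {v : V // v ≠ T.root} := ⟨T.up x k, T.up_ne k.2⟩

lemma edge_inj (x : V) : Function.Injective (T.edge x) := by
  intro j k h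
  exact Fin.ext (T.up_inj j.2.le k.2.le (congrArg Subtype.val h))

lemma anc_mem {x : V} {e : {v : V // v ≠ T.root}} (h : T.Anc e.1 x) :
    e ∈ Set.range (T.edge x) := by
  obtain ⟨k, hk⟩ := h
  exact ⟨⟨k, T.lt_dep (hk ▸ e.2)⟩, Subtype.ext hk⟩

lemma gval_mem {p : ℝ} (hp : 1 < p) (Δ : ℕ) (x : V) :
    Memℓp (fun e : {v : V // v ≠ T.root} => T.gval p Δ x e.1) (ENNReal.ofReal p) := by
  refine memℓp_gen ?_
  refine summable_of_hasFiniteSupport ((Set.finite_range (T.edge x)).subset ?_)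
  intro e he
  refine T.anc_mem ?_
  by_contra h
  apply he
  simp only [T.gval_not hp Δ h]
  rw [ENNReal.toReal_ofReal (by linarith), norm_zero, Real.zero_rpow (by linarith)]

def emb {p : ℝ} (hp : 1 < p) (Δ : ℕ) (x : V) :
    lp (fun _ : {v : V // v ≠ T.root} => ℝ) (ENNReal.ofReal p) :=
  ⟨_, T.gval_mem hp Δ x⟩

lemma emb_apply {p : ℝ} (hp : 1 < p) (Δ : ℕ) (x y : V) (e : {v : V // v ≠ T.root}) :
    (T.emb hp Δ x - T.emb hp Δ y) e = T.gval p Δ x e.1 - T.gval p Δ y e.1 := rfl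

lemma sval_nonneg (Δ : ℕ) (x e : V) : 0 ≤ T.sval Δ x e :=
  Finset.sum_nonneg fun _ _ => le_max_left _ _

lemma sval_step (Δ : ℕ) {x : V} {k : ℕ} (h : k < T.dep x) :
    T.sval Δ x (T.up x k) = T.sval Δ (T.up x 1) (T.up x k) +
      max 0 (T.w x - T.w (T.up x k) / (2 * Δ)) := by
  rw [sval, sval, T.lev_up h, T.lev_parent h, Finset.sum_range_succ']
  congr 1

lemma sval_ge (Δ : ℕ) {x : V} {k : ℕ} (h : k < T.dep x) (hd : T.dep x ≤ Δ) :
    (∑ j ∈ Finset.range (k + 1), T.w (T.up x j)) / 2 ≤ T.sval Δ x (T.up x k) := by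
  rw [sval, T.lev_up h]
  exact aux_s_ge (fun j => T.w (T.up x j)) Δ k (by omega)
    fun j hj => T.w_pos _ (T.up_ne (by omega))

lemma S_pos {x : V} {k : ℕ} (h : k < T.dep x) :
    0 < ∑ j ∈ Finset.range (k + 1), T.w (T.up x j) :=
  Finset.sum_pos (fun j hj => T.w_pos _ (T.up_ne (by have := Finset.mem_range.1 hj; omega)))
    ⟨0, by simp⟩

lemma coord_step {p : ℝ} (hp : 1 < p) (Δ : ℕ) (hΔ : 1 ≤ Δ) {x : V} {k : ℕ} (h : k < T.dep x)
    (hd : T.dep x ≤ Δ) :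
    |T.gval p Δ x (T.up x k) - T.gval p Δ (T.up x 1) (T.up x k)| ^ p ≤
      T.w x ^ p * (2 * (if T.w (T.up x k) < 2 * Δ * T.w (T.up x 0) then
      T.w (T.up x k) / (∑ j ∈ Finset.range (k + 1), T.w (T.up x j)) else 0)) := by
  have hΔ' : (1 : ℝ) ≤ Δ := by exact_mod_cast hΔ
  have hS := T.S_pos h
  have hs := T.sval_ge Δ h hd
  have hst := T.sval_step Δ h
  have hwk := T.w_pos _ (T.up_ne h)
  have hwx : 0 < T.w x := T.w_pos x (T.up_ne (k := 0) (by omega))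
  have hx0 : T.up x 0 = x := rfl
  rw [hx0]
  split_ifs with hif
  · have hc := aux_coord (T.w (T.up x k)) (T.sval Δ x (T.up x k))
      (T.sval Δ (T.up x 1) (T.up x k)) p hp hwk.le (T.sval_nonneg _ _ _)
      (by rw [hst]; linarith [le_max_left 0 (T.w x - T.w (T.up x k) / (2 * Δ))]) (by linarith)
    refine hc.trans ?_
    have hdiff : T.sval Δ x (T.up x k) - T.sval Δ (T.up x 1) (T.up x k) =
      max 0 (T.w x - T.w (T.up x k) / (2 * Δ)) := by rw [hst]; ring
    rw [hdiff]
    refine mul_le_mul ?_ ?_ (div_nonneg hwk.le (T.sval_nonneg _ _ _)) (by positivity)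
    · refine Real.rpow_le_rpow (le_max_left _ _) (max_le hwx.le ?_) (by linarith)
      have : 0 ≤ T.w (T.up x k) / (2 * Δ) := by positivity
      linarith
    · rw [mul_div_assoc', div_le_div_iff₀ (by linarith) hS]
      nlinarith
  · have : max 0 (T.w x - T.w (T.up x k) / (2 * Δ)) = 0 := by
      refine max_eq_left ?_
      rw [sub_nonpos, le_div_iff₀ (by positivity)]
      linarith
    rw [this, add_zero] at hst
    rw [gval, gval, hst]
    simp [Real.zero_rpow (by linarith : p ≠ 0)]

lemma emb_step {p : ℝ} (hp : 1 < p) (Δ : ℕ) (hΔ : 1 ≤ Δ) {x : V} (h0 : 0 < T.dep x)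
    (hd : T.dep x ≤ Δ) :
    ‖T.emb hp Δ x - T.emb hp Δ (T.up x 1)‖ ≤ (8 * Real.log (2 * Δ)) ^ (1 / p) * T.w x := by
  have hp0 : 0 < p := by linarith
  have hwx : 0 < T.w x := T.w_pos x (T.up_ne (k := 0) h0)
  have hΔ' : (1 : ℝ) ≤ Δ := by exact_mod_cast hΔ
  have hlog : 0 ≤ Real.log (2 * Δ) := Real.log_nonneg (by linarith)
  have htr : (ENNReal.ofReal p).toReal = p := ENNReal.toReal_ofReal hp0.le
  have hn := lp.norm_rpow_eq_tsum (p := ENNReal.ofReal p) (by rw [htr]; exact hp0)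
    (T.emb hp Δ x - T.emb hp Δ (T.up x 1))
  rw [htr] at hn
  have hsum : ‖T.emb hp Δ x - T.emb hp Δ (T.up x 1)‖ ^ p =
      ∑ k ∈ Finset.range (T.dep x),
        |T.gval p Δ x (T.up x k) - T.gval p Δ (T.up x 1) (T.up x k)| ^ p := by
    rw [hn, ← (T.edge_inj x).tsum_eq, tsum_fintype, ← Fin.sum_univ_eq_sum_range (fun k : ℕ =>
      |T.gval p Δ x (T.up x k) - T.gval p Δ (T.up x 1) (T.up x k)| ^ p)]
    · rfl
    · intro e he
      by_contra hne
      apply he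
      have h1 : ¬ T.Anc e.1 x := fun h => hne (T.anc_mem h)
      have h2 : ¬ T.Anc e.1 (T.up x 1) := by
        rintro ⟨n, hn⟩
        exact h1 ⟨1 + n, by rw [up_add, hn]⟩
      simp only [T.emb_apply, T.gval_not hp Δ h1, T.gval_not hp Δ h2]
      simp [Real.zero_rpow hp0.ne']
  have hU := aux_upper (fun j => T.w (T.up x j)) Δ (T.dep x) hd hΔ
    (fun j hj => T.w_pos _ (T.up_ne hj))
  have hbound : ‖T.emb hp Δ x - T.emb hp Δ (T.up x 1)‖ ^ p ≤
      ((8 * Real.log (2 * Δ)) ^ (1 / p) * T.w x) ^ p := by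
    rw [hsum]
    refine (Finset.sum_le_sum fun k hk =>
      T.coord_step hp Δ hΔ (Finset.mem_range.1 hk) hd).trans ?_
    rw [← Finset.mul_sum, ← Finset.mul_sum, Real.mul_rpow (by positivity) hwx.le,
      ← Real.rpow_mul (by positivity), one_div_mul_cancel hp0.ne', Real.rpow_one, mul_comm]
    refine mul_le_mul_of_nonneg_right ?_ (by positivity)
    linarith
  exact (Real.rpow_le_rpow_iff (lp.norm_nonneg' _) (by positivity) hp0).1 hbound

lemma emb_chain {p : ℝ} (hp : 1 < p) (Δ : ℕ) (hΔ : 1 ≤ Δ) (hd : ∀ x, T.dep x ≤ Δ) (x : V)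
    (n : ℕ) (hn : n ≤ T.dep x) :
    ‖T.emb hp Δ x - T.emb hp Δ (T.up x n)‖ ≤
      (8 * Real.log (2 * Δ)) ^ (1 / p) * ∑ k ∈ Finset.range n, T.w (T.up x k) := by
  haveI : Fact (1 ≤ ENNReal.ofReal p) := ⟨by simpa using hp.le⟩
  induction n with
  | zero => simp [up]
  | succ n ih =>
    rw [Finset.sum_range_succ, mul_add]
    have h1 := ih (by omega)
    have hdd := T.dep_up (x := x) (k := n) (by omega)
    have h2 := T.emb_step hp Δ hΔ (x := T.up x n) (by omega) (hd _)
    rw [← up_add] at h2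
    exact (norm_sub_le_norm_sub_add_norm_sub _ _ _).trans (add_le_add h1 h2)

lemma emb_lower {p : ℝ} (hp : 1 < p) (Δ : ℕ) (hd : ∀ x, T.dep x ≤ Δ) (x y : V) :
    ∑ k ∈ Finset.range (T.climb x y), T.w (T.up x k) ≤
      4 * ‖T.emb hp Δ x - T.emb hp Δ y‖ := by
  have hp0 : 0 < p := by linarith
  have htr : (ENNReal.ofReal p).toReal = p := ENNReal.toReal_ofReal hp0.le
  have hcd := T.climb_le_dep x y
  set N := ‖T.emb hp Δ x - T.emb hp Δ y‖ with hN
  have hN0 : 0 ≤ N := lp.norm_nonneg' _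
  have hs := lp.sum_rpow_le_norm_rpow (p := ENNReal.ofReal p) (by rw [htr]; exact hp0)
    (T.emb hp Δ x - T.emb hp Δ y)
    (Finset.univ.map (⟨fun k : Fin (T.climb x y) => T.edge x (Fin.castLE hcd k),
      (T.edge_inj x).comp (Fin.castLE_injective hcd)⟩ : Fin (T.climb x y) ↪ _))
  rw [htr, Finset.sum_map] at hs
  have hs' : ∑ k ∈ Finset.range (T.climb x y),
      |T.gval p Δ x (T.up x k) - T.gval p Δ y (T.up x k)| ^ p ≤ N ^ p := by
    rw [← Fin.sum_univ_eq_sum_range (fun k : ℕ =>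
      |T.gval p Δ x (T.up x k) - T.gval p Δ y (T.up x k)| ^ p)]
    exact hs
  have hlow := aux_lower (fun j => T.w (T.up x j)) p hp (T.climb x y)
    (fun j hj => T.w_pos _ (T.up_ne (by omega)))
  have hterm : ∑ k ∈ Finset.range (T.climb x y), T.w (T.up x k) *
        (∑ j ∈ Finset.range (k + 1), T.w (T.up x j)) ^ (p - 1) ≤
      2 ^ (p - 1) * N ^ p := by
    refine le_trans ?_ (mul_le_mul_of_nonneg_left hs' (by positivity))
    rw [Finset.mul_sum]
    refine Finset.sum_le_sum fun k hk => ?_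
    have hk' := Finset.mem_range.1 hk
    have hkd : k < T.dep x := by omega
    have hw := T.w_pos _ (T.up_ne hkd)
    have hS := T.S_pos hkd
    have hsg := T.sval_ge Δ hkd (hd x)
    have hs0 := T.sval_nonneg Δ x (T.up x k)
    rw [T.gval_not hp Δ (T.climb_min hk'), sub_zero, gval,
      abs_of_nonneg (by positivity), Real.mul_rpow (by positivity) (by positivity),
      ← Real.rpow_mul hw.le, ← Real.rpow_mul hs0, one_div_mul_cancel hp0.ne', Real.rpow_one,
      show (1 - 1 / p) * p = p - 1 by field_simp, mul_left_comm,
      ← Real.mul_rpow (by norm_num) hs0]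
    refine mul_le_mul_of_nonneg_left ?_ hw.le
    exact Real.rpow_le_rpow hS.le (by linarith) (by linarith)
  have hA0 : 0 ≤ ∑ k ∈ Finset.range (T.climb x y), T.w (T.up x k) :=
    Finset.sum_nonneg fun k hk =>
      (T.w_pos _ (T.up_ne (by have := Finset.mem_range.1 hk; omega))).le
  refine (Real.rpow_le_rpow_iff hA0 (by positivity) hp0).1 ?_
  have h1 := (div_le_iff₀ hp0).1 (hlow.trans hterm)
  refine h1.trans ?_
  rw [Real.mul_rpow (by norm_num) hN0, show (4 : ℝ) = 2 * 2 by norm_num,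
    Real.mul_rpow (by norm_num) (by norm_num)]
  have hb := one_add_mul_self_le_rpow_one_add (s := (1 : ℝ)) (by norm_num) hp.le
  have h2 : p ≤ (2 : ℝ) ^ p := by
    norm_num at hb; linarith
  have h3 : (2 : ℝ) ^ (p - 1) ≤ 2 ^ p :=
    Real.rpow_le_rpow_of_exponent_le (by norm_num) (by linarith)
  have hNp : 0 ≤ N ^ p := by positivity
  have h4 : (2 : ℝ) ^ (p - 1) * p ≤ 2 ^ p * 2 ^ p :=
    mul_le_mul h3 h2 hp0.le (by positivity)
  calc (2 : ℝ) ^ (p - 1) * N ^ p * p = (2 ^ (p - 1) * p) * N ^ p := by ring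
    _ ≤ _ := mul_le_mul_of_nonneg_right h4 hNp

lemma eq_of_rho_le {x y : V} (h : T.rho x y ≤ 0) : x = y := by
  have key : ∀ x y : V, 0 ≤ ∑ k ∈ Finset.range (T.climb x y), T.w (T.up x k) ∧
      (∑ k ∈ Finset.range (T.climb x y), T.w (T.up x k) ≤ 0 → T.climb x y = 0) := by
    intro x y
    have hpos : ∀ k ∈ Finset.range (T.climb x y), 0 < T.w (T.up x k) := fun k hk =>
      T.w_pos _ (T.up_ne (by have := Finset.mem_range.1 hk; have := T.climb_le_dep x y; omega))
    refine ⟨Finset.sum_nonneg fun k hk => (hpos k hk).le, fun hle => ?_⟩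
    by_contra hne
    exact absurd (Finset.sum_pos hpos ⟨0, by simp; omega⟩) (not_lt.2 hle)
  rw [rho] at h
  have h1 := (key x y).2 (by linarith [(key y x).1])
  have h2 := (key y x).2 (by linarith [(key x y).1])
  have := T.meet_eq x y
  rw [h1, h2] at this
  exact this

end RootedWTree


/-- Corollary 3.5: a weighted tree whose combinatorial diameter `Δ`
(diameter for unit weights) is finite and at least 1 satisfies
`c_{ℓ^p(E)}(T) ≤ 96 (6 ln (2Δ))^{1/p}`; here the edges `E` are identified with
the non-root vertices, and the combinatorial distance between `x` and `y` is
`climb x y + climb y x`, the number of edges on the path joining them. -/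
theorem cdiam_embedding
    {V : Type*} (T : RootedWTree V) (p : ℝ) (hp : 1 < p)
    (Δ : ℕ) (hΔ1 : 1 ≤ Δ)
    (hΔ : IsGreatest {n : ℕ | ∃ x y : V, n = T.climb x y + T.climb y x} Δ) :
    cDist V (lp (fun _ : {v : V // v ≠ T.root} => ℝ) (ENNReal.ofReal p)) T.rho
        (fun a b => ‖a - b‖) ≤
      ENNReal.ofReal (96 * (6 * Real.log (2 * Δ)) ^ (1 / p)) := by
  haveI : Fact (1 ≤ ENNReal.ofReal p) := ⟨by simpa using hp.le⟩
  have hp0 : 0 < p := by linarith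
  have hΔ' : (1 : ℝ) ≤ Δ := by exact_mod_cast hΔ1
  have hlog : 0 ≤ Real.log (2 * Δ) := Real.log_nonneg (by linarith)
  have hd : ∀ x, T.dep x ≤ Δ := fun x => hΔ.2 ⟨x, T.root, T.dep_eq_climb x⟩
  have hco : CoLipUB T.rho (fun a b => ‖a - b‖) (T.emb hp Δ) 8 := by
    intro x y
    have h1 := T.emb_lower hp Δ hd x y
    have h2 := T.emb_lower hp Δ hd y x
    rw [norm_sub_rev] at h2
    simp only [RootedWTree.rho]
    linarith
  have hlip : LipUB T.rho (fun a b => ‖a - b‖) (T.emb hp Δ)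
      ((8 * Real.log (2 * Δ)) ^ (1 / p)) := by
    intro x y
    have h1 := T.emb_chain hp Δ hΔ1 hd x _ (T.climb_le_dep x y)
    have h2 := T.emb_chain hp Δ hΔ1 hd y _ (T.climb_le_dep y x)
    rw [← T.meet_eq x y, norm_sub_rev] at h2
    simp only [RootedWTree.rho, mul_add]
    exact (norm_sub_le_norm_sub_add_norm_sub _ _ _).trans (add_le_add h1 h2)
  have hinj : Function.Injective (T.emb hp Δ) := by
    intro x y hxy
    refine T.eq_of_rho_le ?_
    have := hco x y
    simpa [hxy] using this
  have hmem : (8 * Real.log (2 * Δ)) ^ (1 / p) * 8 ∈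
      distortionSet V (lp (fun _ : {v : V // v ≠ T.root} => ℝ) (ENNReal.ofReal p)) T.rho
        (fun a b => ‖a - b‖) := ⟨T.emb hp Δ, hinj, _, _, hlip, hco, rfl⟩
  refine (iInf₂_le _ hmem).trans (ENNReal.ofReal_le_ofReal ?_)
  have e : 8 * Real.log (2 * Δ) = (4 / 3) * (6 * Real.log (2 * Δ)) := by ring
  rw [e, Real.mul_rpow (by norm_num) (by positivity)]
  have h43 : (4 / 3 : ℝ) ^ (1 / p) ≤ 4 / 3 := by
    conv_rhs => rw [← Real.rpow_one (4 / 3 : ℝ)]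
    refine Real.rpow_le_rpow_of_exponent_le (by norm_num) ?_
    rw [div_le_one hp0]; exact hp.le
  have hX : 0 ≤ (6 * Real.log (2 * Δ)) ^ (1 / p) := by positivity
  nlinarith

end
end

section
/- Let T = (V,E,w) be a weighted tree rooted at some vertex and let κ ≥ 1 be an integer. Then every κ-caterpillar coloring of T is a 1/(4κ)-strong coloring. -/
open Set Function Filter

open scoped ENNReal

attribute [local instance] Classical.propDecidable

noncomputable section

namespace RootedWTree

lemma list_sum_by_color {V C : Type*} (w : V → ℝ) (χ : V → C) (S : Finset C) (L : List V)
    (h : ∀ e ∈ L, χ e ∈ S) :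
    (L.map w).sum = ∑ c ∈ S, ((L.filter (fun e => decide (χ e = c))).map w).sum := by
  induction L with
  | nil => simp
  | cons a L ih =>
    have ih' := ih (fun e he => h e (List.mem_cons_of_mem _ he))
    have ha : χ a ∈ S := h a List.mem_cons_self
    have : ∀ c ∈ S, (((a :: L).filter (fun e => decide (χ e = c))).map w).sum
        = (if χ a = c then w a else 0) + ((L.filter (fun e => decide (χ e = c))).map w).sum := by
      intro c _
      by_cases hc : χ a = c <;> simp [hc]
    rw [Finset.sum_congr rfl this, Finset.sum_add_distrib, ← ih', Finset.sum_ite_eq]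
    simp [ha]

lemma list_sum_split {V : Type*} (w : V → ℝ) (p : V → Prop) (L : List V) :
    (L.map w).sum = ((L.filter (fun e => decide (p e))).map w).sum
      + ((L.filter (fun e => decide (¬ p e))).map w).sum := by
  induction L with
  | nil => simp
  | cons a L ih =>
    by_cases h : p a
    · simp only [List.map_cons, List.sum_cons, List.filter_cons, h, decide_true, if_true,
        not_true_eq_false, decide_false, Bool.false_eq_true, if_false]
      linarith
    · simp only [List.map_cons, List.sum_cons, List.filter_cons, h, decide_true, if_true,
        not_false_eq_true, decide_false, Bool.false_eq_true, if_false]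
      linarith

lemma list_bad_le {V C : Type*} (w : V → ℝ) (χ : V → C) (S : Finset C) (L : List V)
    (h : ∀ e ∈ L, χ e ∈ S) (t : ℝ) (ht : 0 ≤ t) (ℓ : C → ℝ)
    (hℓ : ∀ c, ℓ c = ((L.filter (fun e => decide (χ e = c))).map w).sum) :
    ((L.filter (fun e => decide (¬ t ≤ ℓ (χ e)))).map w).sum ≤ S.card * t := by
  rw [list_sum_by_color w χ S _ (fun e he => h e (List.mem_filter.1 he).1), ← nsmul_eq_mul]
  apply Finset.sum_le_card_nsmul
  intro c _
  rw [List.filter_filter]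
  by_cases hc : t ≤ ℓ c
  · rw [List.filter_eq_nil_iff.2]
    · simpa using ht
    · intro e _ he
      simp only [Bool.and_eq_true, decide_eq_true_eq] at he
      exact he.2 (he.1 ▸ hc)
  · have : L.filter (fun e => decide (χ e = c) && decide (¬ t ≤ ℓ (χ e)))
        = L.filter (fun e => decide (χ e = c)) := by
      apply List.filter_congr
      intro e _
      by_cases he : χ e = c
      · simp [he, lt_of_not_ge hc]
      · simp [he]
    rw [this, ← hℓ]
    exact (lt_of_not_ge hc).le

lemma caterpillar_colors {V C : Type*} (T : RootedWTree V) (κ : ℕ)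
    (χ : V → C) (hχ : T.IsCaterpillar χ κ) (x : V) :
    ∃ s : Finset C, s.card ≤ κ ∧ ∀ k, T.up x k ≠ T.root → χ (T.up x k) ∈ s := by
  have hadd : ∀ a b, a ≤ b → T.Anc (T.up x b) (T.up x a) := by
    intro a b hab
    refine ⟨b - a, ?_⟩
    simp only [up]
    rw [← Function.iterate_add_apply, Nat.sub_add_cancel hab]
  have hc : IsChain (fun u v => T.Anc u v) (Set.range (T.up x)) := by
    rintro _ ⟨a, rfl⟩ _ ⟨b, rfl⟩ _
    rcases le_total a b with h | h
    · exact Or.inr (hadd a b h)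
    · exact Or.inl (hadd b a h)
  obtain ⟨P, hP, hsub⟩ := hc.exists_maxChain
  obtain ⟨s, hs, h⟩ := hχ.2 P hP
  exact ⟨s, hs, fun k hk => h _ (hsub ⟨k, rfl⟩) hk⟩

lemma up_ne_root {V : Type*} (T : RootedWTree V) (x y : V) (k : ℕ) (hk : k < T.climb x y) :
    T.up x k ≠ T.root := by
  intro h
  apply Nat.find_min (T.exists_anc x y) hk
  rw [h]
  exact T.reach y

lemma rho_nonneg {V : Type*} (T : RootedWTree V) (x y : V) : 0 ≤ T.rho x y := by
  have : ∀ x y, 0 ≤ ∑ k ∈ Finset.range (T.climb x y), T.w (T.up x k) := fun x y =>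
    Finset.sum_nonneg fun k hk =>
      (T.w_pos _ (T.up_ne_root x y k (Finset.mem_range.1 hk))).le
  exact add_nonneg (this x y) (this y x)

lemma rho_eq {V : Type*} (T : RootedWTree V) (x y : V) :
    ((T.pathEdges x y).map T.w).sum = T.rho x y := by
  have (n : ℕ) (f : ℕ → ℝ) : ((List.range n).map f).sum = ∑ k ∈ Finset.range n, f k := by
    induction n with
    | zero => simp
    | succ n ih => simp [List.range_succ, Finset.sum_range_succ, ih]
  simp only [pathEdges, rho, List.map_append, List.sum_append, List.map_map, this,
    Function.comp_apply]

end RootedWTree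

/-- Lemma 3.6: every `κ`-caterpillar coloring of a weighted rooted
tree is a `1/(4κ)`-strong coloring. -/
theorem caterpillar_is_strong
    {V C : Type*} (T : RootedWTree V) (κ : ℕ) (hκ : 1 ≤ κ)
    (χ : V → C) (hχ : T.IsCaterpillar χ κ) :
    T.IsStrong χ (1 / (4 * (κ : ℝ))) := by
  refine ⟨hχ.1, fun x y _ => ?_⟩
  obtain ⟨s₁, hs₁, h₁⟩ := T.caterpillar_colors κ χ hχ x
  obtain ⟨s₂, hs₂, h₂⟩ := T.caterpillar_colors κ χ hχ y
  have hρ := T.rho_nonneg x y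
  have hκ0 : (0 : ℝ) < κ := by exact_mod_cast hκ
  have ht : 0 ≤ 1 / (4 * (κ : ℝ)) * T.rho x y := by positivity
  have hS : ∀ e ∈ T.pathEdges x y, χ e ∈ s₁ ∪ s₂ := by
    intro e he
    simp only [RootedWTree.pathEdges, List.mem_append, List.mem_map, List.mem_range] at he
    rcases he with ⟨k, hk, rfl⟩ | ⟨k, hk, rfl⟩
    · exact Finset.mem_union_left _ (h₁ k (T.up_ne_root x y k hk))
    · exact Finset.mem_union_right _ (h₂ k (T.up_ne_root y x k hk))
  have hbad := RootedWTree.list_bad_le T.w χ (s₁ ∪ s₂) (T.pathEdges x y) hS _ ht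
    (fun c => T.colorLen χ c x y) (fun c => rfl)
  have hsplit := RootedWTree.list_sum_split T.w
    (fun e => 1 / (4 * (κ : ℝ)) * T.rho x y ≤ T.colorLen χ (χ e) x y) (T.pathEdges x y)
  rw [T.rho_eq] at hsplit
  have hcard : ((s₁ ∪ s₂).card : ℝ) ≤ 2 * κ := by
    have := Finset.card_union_le s₁ s₂
    have h2 : (s₁ ∪ s₂).card ≤ 2 * κ := by omega
    exact_mod_cast h2
  have hle := mul_le_mul_of_nonneg_right hcard ht
  have heq : 2 * (κ : ℝ) * (1 / (4 * (κ : ℝ)) * T.rho x y) = T.rho x y / 2 := by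
    field_simp
    norm_num
  rw [heq] at hle
  linarith

end
end

section
/- Let B_∞ be the infinite rooted binary tree (vertices: finite sequences of 0s and 1s, edges joining each vertex to its one-term extensions), with edge weight 2^{−n} on each edge joining a vertex of height n−1 to a vertex of height n, equipped with the resulting path metric. Then the edge coloring assigning a distinct color to every edge is a 1/4-strong coloring of B_∞, while B_∞ admits no κ-caterpillar coloring for any integer κ ≥ 1. -/
open Set Function Filter

open scoped ENNReal

attribute [local instance] Classical.propDecidable

noncomputable section

lemma tail_iterate_length (l : List Bool) : List.tail^[l.length] l = [] := by
  induction l with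
  | nil => rfl
  | cons a l ih => simpa [Function.iterate_succ_apply] using ih

def binTree : RootedWTree (List Bool) where
  root := []
  parent := List.tail
  w v := (2 : ℝ)⁻¹ ^ v.length
  parent_root := rfl
  reach v := ⟨v.length, tail_iterate_length v⟩
  w_pos v _ := by positivity

lemma bt_up (v : List Bool) (n : ℕ) : binTree.up v n = v.drop n := by
  show List.tail^[n] v = v.drop n
  induction n generalizing v with
  | zero => simp
  | succ n ih => rw [Function.iterate_succ_apply, ih]; simp

lemma bt_w (v : List Bool) : binTree.w v = (2 : ℝ)⁻¹ ^ v.length := rfl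

lemma bt_root : binTree.root = [] := rfl

lemma bt_climb_le (x y : List Bool) : binTree.climb x y ≤ x.length := by
  apply Nat.find_min'
  refine ⟨y.length, ?_⟩
  simp [bt_up]

lemma bt_climb_spec (x y : List Bool) :
    binTree.Anc (binTree.up x (binTree.climb x y)) y :=
  Nat.find_spec (binTree.exists_anc x y)

lemma bt_meet_le (x y : List Bool) :
    x.length - binTree.climb x y ≤ y.length - binTree.climb y x := by
  obtain ⟨n, hn⟩ := bt_climb_spec x y
  have h : binTree.climb y x ≤ n := Nat.find_min' _ ⟨_, hn.symm⟩
  have := congrArg List.length hn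
  simp only [bt_up, List.length_drop] at this
  omega

lemma bt_meet (x y : List Bool) :
    x.length - binTree.climb x y = y.length - binTree.climb y x :=
  le_antisymm (bt_meet_le x y) (bt_meet_le y x)

lemma bt_side (x : List Bool) (a : ℕ) (ha : a ≤ x.length) :
    ∑ k ∈ Finset.range a, binTree.w (binTree.up x k) ≤ (2 : ℝ)⁻¹ ^ (x.length - a) := by
  suffices h : ∑ k ∈ Finset.range a, binTree.w (binTree.up x k) =
      (2 : ℝ)⁻¹ ^ (x.length - a) - (2 : ℝ)⁻¹ ^ x.length by
    rw [h]
    have : (0 : ℝ) < (2 : ℝ)⁻¹ ^ x.length := by positivity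
    linarith
  induction a with
  | zero => simp
  | succ a ih =>
    rw [Finset.sum_range_succ, ih (by omega), bt_w, bt_up, List.length_drop]
    have : x.length - a = (x.length - (a + 1)) + 1 := by omega
    rw [this, pow_succ]
    ring

lemma bt_mem_sum (l : List (List Bool)) (e : List Bool) (he : e ∈ l) :
    binTree.w e ≤ (l.map binTree.w).sum := by
  apply List.single_le_sum
  · intro r hr
    obtain ⟨v, -, rfl⟩ := List.mem_map.1 hr
    rw [bt_w]; positivity
  · exact List.mem_map_of_mem he

lemma bt_filter_side (x : List Bool) (a : ℕ) (ha : a ≤ x.length) (p : List Bool → Bool)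
    (hp : 1 ≤ a → p (binTree.up x (a - 1)) = true) :
    (∑ k ∈ Finset.range a, binTree.w (binTree.up x k)) / 2 ≤
      ((((List.range a).map (fun k => binTree.up x k)).filter p).map binTree.w).sum := by
  rcases Nat.eq_zero_or_pos a with rfl | h
  · simp
  · refine le_trans ?_ (bt_mem_sum _ (binTree.up x (a - 1)) ?_)
    · have := bt_side x a ha
      rw [bt_w (binTree.up x (a - 1)), bt_up x (a - 1), List.length_drop]
      have h2 : x.length - (a - 1) = (x.length - a) + 1 := by omega
      rw [h2, pow_succ]
      linarith
    · rw [List.mem_filter]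
      refine ⟨List.mem_map.2 ⟨a - 1, ?_, rfl⟩, hp h⟩
      rw [List.mem_range]; omega

lemma bt_rho_le (x y : List Bool) :
    binTree.rho x y ≤ 2 * (2 : ℝ)⁻¹ ^ (x.length - binTree.climb x y) := by
  have h1 := bt_side x _ (bt_climb_le x y)
  have h2 := bt_side y _ (bt_climb_le y x)
  rw [← bt_meet x y] at h2
  unfold RootedWTree.rho
  linarith

lemma bt_top (x y e : List Bool) (he : e ∈ binTree.pathEdges x y)
    (hl : e.length = (x.length - binTree.climb x y) + 1) :
    1 / 4 * binTree.rho x y ≤ binTree.colorLen (fun v : List Bool => v) e x y := by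
  have h1 := bt_rho_le x y
  have h2 : binTree.w e ≤ binTree.colorLen (fun v : List Bool => v) e x y := by
    apply bt_mem_sum
    rw [List.mem_filter]
    exact ⟨he, by simp⟩
  rw [bt_w, hl, pow_succ] at h2
  linarith

lemma bt_strong : binTree.IsStrong (fun v : List Bool => v) (1 / 4) := by
  refine ⟨?_, ?_⟩
  · intro c
    refine ⟨?_, ?_⟩
    · intro u v _ _ hu hv
      exact Or.inl ⟨0, by simp only [bt_up, List.drop_zero]; exact hv.trans hu.symm⟩
    · intro v n hv hc _ hn k hk
      simp only [bt_up, bt_root] at *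
      subst hc
      have h0 : 0 < v.length := List.length_pos_iff.2 hv
      have h := congrArg List.length hn
      rw [List.length_drop] at h
      have : k = 0 := by omega
      simp [this]
  · intro x y _
    have hx := bt_climb_le x y
    have hy := bt_climb_le y x
    have hm := bt_meet x y
    have h1 := bt_filter_side x _ hx
      (fun e => decide (1 / 4 * binTree.rho x y ≤
        binTree.colorLen (fun v : List Bool => v) e x y)) (by
      intro h
      refine decide_eq_true (bt_top x y _ ?_ ?_)
      · refine List.mem_append_left _ (List.mem_map.2 ⟨_, ?_, rfl⟩)
        rw [List.mem_range]; omega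
      · rw [bt_up, List.length_drop]; omega)
    have h2 := bt_filter_side y _ hy
      (fun e => decide (1 / 4 * binTree.rho x y ≤
        binTree.colorLen (fun v : List Bool => v) e x y)) (by
      intro h
      refine decide_eq_true (bt_top x y _ ?_ ?_)
      · refine List.mem_append_right _ (List.mem_map.2 ⟨_, ?_, rfl⟩)
        rw [List.mem_range]; omega
      · rw [bt_up, List.length_drop]; omega)
    have h3 : binTree.rho x y = _ + _ := rfl
    rw [RootedWTree.pathEdges, List.filter_append, List.map_append, List.sum_append]
    refine le_trans (le_of_eq ?_) (add_le_add h1 h2)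
    rw [← add_div]; rfl

lemma bt_not_cat (C : Type) (χ : List Bool → C) (κ : ℕ) : ¬ binTree.IsCaterpillar χ κ := by
  rintro ⟨hmono, hbr⟩
  have hstep : ∀ v : List Bool, ∃ b : Bool, v ≠ [] → χ (b :: v) ≠ χ v := by
    intro v
    by_contra hcon
    push Not at hcon
    have ht := (hcon true).2
    have hf := (hcon false).2
    rcases (hmono (χ v)).1 (true :: v) (false :: v) (by simp [bt_root]) (by simp [bt_root])
      ht hf with ⟨n, hn⟩ | ⟨n, hn⟩ <;>
    · rw [bt_up] at hn
      have hl := congrArg List.length hn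
      rw [List.length_drop] at hl
      simp only [List.length_cons] at hl
      have : n = 0 := by omega
      subst this
      simp at hn
  choose b hb using hstep
  let s : ℕ → List Bool := fun n => Nat.rec [] (fun _ v => b v :: v) n
  have hs : ∀ n, s (n + 1) = b (s n) :: s n := fun _ => rfl
  have hlen : ∀ n, (s n).length = n := by
    intro n
    induction n with
    | zero => rfl
    | succ n ih => rw [hs, List.length_cons, ih]
  have hdrop : ∀ i k, binTree.up (s (i + k)) k = s i := by
    intro i k
    rw [bt_up]
    induction k with
    | zero => simp
    | succ k ih => rw [← add_assoc, hs, List.drop_succ_cons, ih]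
  have hne : ∀ n, s (n + 1) ≠ [] := fun n => by rw [hs]; simp
  have hinj : ∀ i j, i < j → χ (s (i + 1)) ≠ χ (s (j + 1)) := by
    intro i j hij heq
    obtain ⟨d, rfl⟩ : ∃ d, j = i + d + 1 := ⟨j - i - 1, by omega⟩
    have hu : binTree.up (s (i + d + 1 + 1)) (d + 1) = s (i + 1) := by
      have e : i + d + 1 + 1 = (i + 1) + (d + 1) := by omega
      rw [e]; exact hdrop (i + 1) (d + 1)
    have h := (hmono (χ (s (i + 1)))).2 (s (i + d + 1 + 1)) (d + 1) (hne (i + d + 1)) heq.symm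
      (by rw [hu]; exact hne i) (by rw [hu]) 1 (by omega)
    rw [hdrop (i + d + 1) 1] at h
    exact hb (s (i + d + 1)) (hne _) (by
      rw [← hs (i + d + 1)]; exact (h.trans heq).symm)
  have hchain : binTree.IsBranch (Set.range s) := by
    refine ⟨?_, ?_⟩
    · rintro _ ⟨i, rfl⟩ _ ⟨j, rfl⟩ _
      rcases le_total i j with h | h
      · obtain ⟨k, rfl⟩ := Nat.exists_eq_add_of_le h
        exact Or.inl ⟨k, hdrop i k⟩
      · obtain ⟨k, rfl⟩ := Nat.exists_eq_add_of_le h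
        exact Or.inr ⟨k, hdrop j k⟩
    · intro t ht hst
      refine Set.Subset.antisymm hst ?_
      intro q hq
      refine ⟨q.length, ?_⟩
      refine Classical.byContradiction fun hneq => ?_
      have key : ∀ u v : List Bool, u.length = v.length → binTree.Anc u v → u = v := by
        rintro u v hl ⟨n, hn⟩
        rw [bt_up] at hn
        have h := congrArg List.length hn
        rw [List.length_drop] at h
        rw [← hn]
        rcases Nat.eq_zero_or_pos n with rfl | h0
        · simp
        · have : v = [] := List.length_eq_zero_iff.1 (by omega)
          simp [this]
      rcases ht (hst ⟨q.length, rfl⟩) hq hneq with h | h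
      · exact hneq (key _ _ (hlen _) h)
      · exact hneq (key _ _ (hlen _).symm h).symm
  obtain ⟨S, hcard, hS⟩ := hbr _ hchain
  have hle := Finset.card_le_card_of_injOn (s := Finset.range (κ + 1)) (t := S)
    (fun i => χ (s (i + 1))) (fun i _ => hS _ ⟨i + 1, rfl⟩ (hne i)) (by
      intro i _ j _ hij
      rcases lt_trichotomy i j with h | h | h
      · exact absurd hij (hinj i j h)
      · exact h
      · exact absurd hij.symm (hinj j i h))
  rw [Finset.card_range] at hle
  omega

/-- Proposition 3.7: on the infinite binary tree with weight
`2^{-n}` on edges at height `n`, the coloring assigning a distinct color to every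
edge is `1/4`-strong, while no coloring is `κ`-caterpillar for any `κ ≥ 1`. -/
theorem binTree_strong_not_caterpillar :
    binTree.IsStrong (fun v : List Bool => v) (1 / 4) ∧
    ∀ (C : Type) (χ : List Bool → C) (κ : ℕ), 1 ≤ κ → ¬ binTree.IsCaterpillar χ κ := by
  exact ⟨bt_strong, fun C χ κ _ => bt_not_cat C χ κ⟩

end
end

section
/- Let X and Y be real Banach spaces, let Z ⊆ X, and let f : Z → Y be a surjective uniform quotient map that is Lipschitz for large distances. Then there exists a constant A ∈ (0,∞), depending only on f, such that for every connected simple unweighted graph G (equipped with its shortest-path metric), qc_X(G) ≤ A·qc_Y(G). -/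
open Set Function Filter

open scoped ENNReal

attribute [local instance] Classical.propDecidable

noncomputable section

def LipQuotientWith {α β : Type*} (dα : α → α → ℝ) (dβ : β → β → ℝ) (f : α → β)
    (L C : ℝ) : Prop :=
  Function.Surjective f ∧
  (∀ (x a : α) (r : ℝ), 0 < r → dα x a ≤ r → dβ (f x) (f a) ≤ L * r) ∧
  (∀ (x : α) (y : β) (r : ℝ), 0 < r → dβ (f x) y ≤ r / C → ∃ a : α, dα x a ≤ r ∧ f a = y)

def qcSet (X : Type*) [PseudoMetricSpace X] (β : Type*) (dβ : β → β → ℝ) : Set ℝ :=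
  {q | ∃ (Z : Set X) (f : Z → β) (L C : ℝ), 0 < L ∧ 0 < C ∧
    LipQuotientWith (fun a b : Z => dist a.1 b.1) dβ f L C ∧ q = L * C}

def qcDist (X : Type*) [PseudoMetricSpace X] (β : Type*) (dβ : β → β → ℝ) : ℝ≥0∞ :=
  ⨅ q ∈ qcSet X β dβ, ENNReal.ofReal q
def UniformQuotientMap {α β : Type*} (dα : α → α → ℝ) (dβ : β → β → ℝ) (f : α → β) : Prop :=
  Function.Surjective f ∧
  ∃ ρ ω : ℝ → ℝ,
    (∀ s t : ℝ, 0 < s → s ≤ t → ρ s ≤ ρ t) ∧ (∀ s t : ℝ, 0 < s → s ≤ t → ω s ≤ ω t) ∧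
    (∀ t : ℝ, 0 < t → 0 < ρ t) ∧ (∀ t : ℝ, 0 < t → 0 < ω t) ∧
    Filter.Tendsto ω (nhdsWithin 0 (Set.Ioi (0:ℝ))) (nhds 0) ∧
    ∀ (x : α) (r : ℝ), 0 < r →
      (∀ y : β, dβ (f x) y ≤ ρ r → ∃ a : α, dα x a ≤ r ∧ f a = y) ∧
      (∀ a : α, dα x a ≤ r → dβ (f x) (f a) ≤ ω r)

def LipLargeDist {α β : Type*} (dα : α → α → ℝ) (dβ : β → β → ℝ) (f : α → β) : Prop :=
  ∀ s : ℝ, 0 < s → ∃ M : ℝ, ∀ a b : α, s ≤ dα a b → dβ (f a) (f b) ≤ M * dα a b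

theorem uqt_step {X Y : Type*} [NormedAddCommGroup X]
    [NormedAddCommGroup Y] [NormedSpace ℝ Y] (Z : Set X) (f : Z → Y) (ρ : ℝ)
    (h : ∀ (x : Z) (y : Y), dist (f x) y ≤ ρ → ∃ a : Z, dist x.1 a.1 ≤ 1 ∧ f a = y)
    (n : ℕ) : ∀ (x : Z) (y : Y), dist (f x) y ≤ n * ρ →
      ∃ a : Z, dist x.1 a.1 ≤ n ∧ f a = y := by
  induction n with
  | zero =>
    intro x y hxy
    refine ⟨x, by simp, ?_⟩
    have : dist (f x) y ≤ 0 := by simpa using hxy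
    exact dist_le_zero.1 this
  | succ n ih =>
    intro x y hxy
    have hn : (0:ℝ) < (n:ℝ) + 1 := by positivity
    push_cast at hxy
    obtain ⟨b, hb, hfb⟩ := h x (AffineMap.lineMap (f x) y (1 / ((n:ℝ) + 1))) (by
      rw [dist_left_lineMap, Real.norm_of_nonneg (by positivity), one_div, inv_mul_le_iff₀ hn]
      exact hxy)
    obtain ⟨a, ha, hfa⟩ := ih b y (by
      rw [hfb, dist_lineMap_right]
      have h1 : 1 - 1 / ((n:ℝ) + 1) = n / (n + 1) := by field_simp; ring
      rw [h1, Real.norm_of_nonneg (by positivity), div_mul_eq_mul_div, div_le_iff₀ hn]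
      have := mul_le_mul_of_nonneg_left hxy (Nat.cast_nonneg (α := ℝ) n)
      nlinarith)
    refine ⟨a, ?_, hfa⟩
    push_cast
    linarith [dist_triangle x.1 b.1 a.1]

/-- Proposition 4.9: if a Banach space `Y` is a uniform subquotient
of a Banach space `X` via a uniform quotient map that is Lipschitz for large
distances, then there is a constant `A` such that `qc_X(G) ≤ A qc_Y(G)` for every
connected simple unweighted graph `G`. -/
theorem uniform_quotient_graph_transfer
    (X : Type*) [NormedAddCommGroup X] [NormedSpace ℝ X] [CompleteSpace X]
    (Y : Type*) [NormedAddCommGroup Y] [NormedSpace ℝ Y] [CompleteSpace Y]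
    (Z : Set X) (f : Z → Y)
    (hf : UniformQuotientMap (fun a b : Z => dist a.1 b.1) (fun a b : Y => dist a b) f)
    (hlip : LipLargeDist (fun a b : Z => dist a.1 b.1) (fun a b : Y => dist a b) f) :
    ∃ A : ℝ, 0 < A ∧ ∀ (V : Type) (G : SimpleGraph V), G.Connected →
      qcDist X V (fun u v => (G.dist u v : ℝ)) ≤
        ENNReal.ofReal A * qcDist Y V (fun u v => (G.dist u v : ℝ)) := by
  obtain ⟨hsurj, ρ, ω, -, -, hρ, hω, -, hq⟩ := hf
  obtain ⟨M₀, hM₀⟩ := hlip 1 one_pos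
  have hρ1 := hρ 1 one_pos
  have hω1 := hω 1 one_pos
  set M : ℝ := max M₀ 1 with hMdef
  have hM1 : 1 ≤ M := le_max_right _ _
  have hM : ∀ a b : Z, 1 ≤ dist a.1 b.1 → dist (f a) (f b) ≤ M * dist a.1 b.1 := fun a b hab =>
    (hM₀ a b hab).trans (mul_le_mul_of_nonneg_right (le_max_left _ _) dist_nonneg)
  have hstep := uqt_step Z f (ρ 1) (fun x y => (hq x 1 one_pos).1 y)
  have hco : ∀ (x : Z) (y : Y) (t : ℝ), dist (f x) y ≤ t →
      ∃ a : Z, dist x.1 a.1 ≤ t / ρ 1 + 1 ∧ f a = y := by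
    intro x y t ht
    have ht0 : 0 ≤ t := dist_nonneg.trans ht
    obtain ⟨a, ha, hfa⟩ := hstep ⌈t / ρ 1⌉₊ x y (by
      refine ht.trans ?_
      rw [← div_le_iff₀ hρ1]
      exact Nat.le_ceil _)
    exact ⟨a, ha.trans (Nat.ceil_lt_add_one (by positivity)).le, hfa⟩
  have hA : 0 < M / ρ 1 + M / (ω 1 + 1) := by positivity
  refine ⟨M / ρ 1 + M / (ω 1 + 1), hA, ?_⟩
  intro V G hG
  set A := M / ρ 1 + M / (ω 1 + 1) with hAdef
  set D := ω 1 + 1 with hD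
  have hD0 : 0 < D := by positivity
  have hA' : ENNReal.ofReal A ≠ 0 := by simpa using hA
  rw [mul_comm, ← ENNReal.div_le_iff hA' ENNReal.ofReal_ne_top]
  refine le_iInf₂ fun q hqm => ?_
  rw [ENNReal.div_le_iff hA' ENNReal.ofReal_ne_top]
  obtain ⟨W, g, L, C, hL, hC, ⟨gs, gl, gc⟩, rfl⟩ := hqm
  rw [mul_comm, ← ENNReal.ofReal_mul hA.le]
  -- reduce to a single witness
  suffices hs : ∃ q' ∈ qcSet X V (fun u v => (G.dist u v : ℝ)), q' ≤ A * (L * C) by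
    obtain ⟨q', h1, h2⟩ := hs
    exact (iInf₂_le q' h1).trans (ENNReal.ofReal_le_ofReal h2)
  obtain ⟨v₀⟩ := hG.nonempty
  rcases subsingleton_or_nontrivial V with hV | hV
  · refine ⟨A * (L * C), ⟨{0}, fun _ => v₀, A * (L * C), 1, by positivity, one_pos,
      ⟨fun v => ⟨⟨0, rfl⟩, Subsingleton.elim _ _⟩, ?_, ?_⟩, by ring⟩, le_rfl⟩
    · intro x a r hr _
      simp only [SimpleGraph.dist_self, Nat.cast_zero]
      positivity
    · intro x y r hr _
      exact ⟨x, by simpa using hr.le, Subsingleton.elim _ _⟩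
  have hd1 : ∀ u v : V, u ≠ v → (1:ℝ) ≤ G.dist u v := fun u v huv => by
    exact_mod_cast hG.pos_dist_of_ne huv
  have gl' : ∀ a b : W, g a ≠ g b → (G.dist (g a) (g b) : ℝ) ≤ L * dist a.1 b.1 := by
    intro a b hab
    refine gl a b _ (dist_pos.2 fun h => hab ?_) le_rfl
    rw [Subtype.ext h]
  have gc' : ∀ (a : W) (v : V), g a ≠ v →
      ∃ b : W, dist a.1 b.1 ≤ C * G.dist (g a) v ∧ g b = v := by
    intro a v hav
    have := hd1 _ _ hav
    exact gc a v (C * G.dist (g a) v) (by positivity) (by field_simp; exact le_rfl)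
  have hLC : 1 ≤ L * C := by
    obtain ⟨w, hw⟩ := gs v₀
    obtain ⟨v₁, hv₁⟩ := exists_ne v₀
    have hne : g w ≠ v₁ := by rw [hw]; exact hv₁.symm
    obtain ⟨b, hb, hgb⟩ := gc' w v₁ hne
    have h1 := gl' w b (by rw [hgb]; exact hne)
    rw [hgb] at h1
    have h2 := hd1 _ _ hne
    have h3 := mul_le_mul_of_nonneg_left hb hL.le
    by_contra hcon
    push Not at hcon
    nlinarith
  -- the scaling factor
  set lam : ℝ := D * L with hlam
  have hl0 : 0 < lam := by positivity
  have hsc : ∀ y z : Y, dist (lam⁻¹ • y) (lam⁻¹ • z) = lam⁻¹ * dist y z := fun y z => by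
    rw [dist_smul₀, Real.norm_of_nonneg (by positivity)]
  let Z' : Set X := {x | ∃ hx : x ∈ Z, lam⁻¹ • f ⟨x, hx⟩ ∈ W}
  let p : Z' → Z := fun x => ⟨x.1, x.2.1⟩
  let k : Z' → W := fun x => ⟨lam⁻¹ • f (p x), x.2.2⟩
  have hlift : ∀ (a : Z) (w : W), f a = lam • w.1 → ∃ b : Z', p b = a ∧ k b = w := by
    intro a w h
    have h' : lam⁻¹ • f a = w.1 := by rw [h, inv_smul_smul₀ hl0.ne']
    refine ⟨⟨a.1, a.2, ?_⟩, rfl, Subtype.ext h'⟩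
    change lam⁻¹ • f a ∈ W
    rw [h']; exact w.2
  refine ⟨(M / D) * (lam * C / ρ 1 + 1), ⟨Z', fun x => g (k x), M / D, lam * C / ρ 1 + 1,
    by positivity, by positivity, ⟨?_, ?_, ?_⟩, rfl⟩, ?_⟩
  · intro v
    obtain ⟨w, hw⟩ := gs v
    obtain ⟨a, ha⟩ := hsurj (lam • w.1)
    obtain ⟨b, -, hb⟩ := hlift a w ha
    exact ⟨b, by simp only [hb, hw]⟩
  · intro x a r hr hxa
    change dist (p x).1 (p a).1 ≤ r at hxa
    by_cases hne : g (k x) = g (k a)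
    · simp only [hne, SimpleGraph.dist_self, Nat.cast_zero]
      positivity
    have h1 := gl' _ _ hne
    have h2 : dist (k x).1 (k a).1 = lam⁻¹ * dist (f (p x)) (f (p a)) := hsc _ _
    have h3 : L * (lam⁻¹ * dist (f (p x)) (f (p a))) = dist (f (p x)) (f (p a)) / D := by
      rw [hlam]; field_simp
    rw [h2, h3] at h1
    have h4 : D ≤ dist (f (p x)) (f (p a)) := by
      have := (hd1 _ _ hne).trans h1
      rwa [le_div_iff₀ hD0, one_mul] at this
    have h5 : 1 ≤ dist (p x).1 (p a).1 := by
      by_contra hcon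
      have := (hq (p x) 1 one_pos).2 (p a) (not_le.1 hcon).le
      simp only at this
      linarith
    refine h1.trans ?_
    rw [div_mul_eq_mul_div]
    refine div_le_div_of_nonneg_right ?_ hD0.le
    exact (hM _ _ h5).trans (mul_le_mul_of_nonneg_left hxa (by linarith))
  · intro x v r hr hxv
    by_cases hne : g (k x) = v
    · exact ⟨x, by simpa using hr.le, hne⟩
    obtain ⟨w, hw, hgw⟩ := gc' (k x) v hne
    have hd := hd1 _ _ hne
    have h2 : dist (k x).1 w.1 = lam⁻¹ * dist (f (p x)) (lam • w.1) := by
      rw [← hsc, inv_smul_smul₀ hl0.ne']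
    rw [h2, inv_mul_le_iff₀ hl0] at hw
    obtain ⟨a, ha, hfa⟩ := hco _ _ _ hw
    obtain ⟨b, hb1, hb2⟩ := hlift a w hfa
    refine ⟨b, ?_, by simp only [hb2, hgw]⟩
    change dist (p x).1 (p b).1 ≤ r
    rw [hb1]
    refine ha.trans ?_
    rw [le_div_iff₀ (by positivity)] at hxv
    refine le_trans ?_ hxv
    have : lam * (C * (G.dist (g (k x)) v : ℝ)) / ρ 1
      = (G.dist (g (k x)) v : ℝ) * (lam * C / ρ 1) := by ring
    rw [this]
    linarith
  · have h1 : (M / D) * (lam * C / ρ 1 + 1) = M / ρ 1 * (L * C) + M / D := by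
      rw [hlam]; field_simp
    rw [h1, hAdef, add_mul]
    have h2 : M / D * 1 ≤ M / D * (L * C) :=
      mul_le_mul_of_nonneg_left hLC (by positivity)
    linarith

end
end

section
/- Let p ∈ (1,∞) and let X be a real Banach space admitting an equivalent norm with property (β_p) with some constant γ > 0. Suppose a Banach space Y is a uniform subquotient of X via a uniform quotient map that is Lipschitz for large distances. Then for every q ∈ (p,∞), ℓ_q is not a uniform subquotient of Y via a uniform quotient map that is Lipschitz for large distances. -/
open Set Function Filter

open scoped ENNReal

attribute [local instance] Classical.propDecidable

noncomputable section

def rolewiczSetN {Y : Type*} [AddCommGroup Y] (N : Y → ℝ) (t : ℝ) : Set ℝ :=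
  {s | ∃ x : Y, N x ≤ 1 ∧ ∃ y : ℕ → Y, (∀ i, N (y i) ≤ 1) ∧
    (∀ n m : ℕ, n ≠ m → t ≤ N (y n - y m)) ∧ s = ⨅ i, N (x - y i) / 2}

def rolewiczModN {Y : Type*} [AddCommGroup Y] (N : Y → ℝ) (t : ℝ) : ℝ :=
  1 - sSup (rolewiczSetN N t)

def IsEquivNorm (Y : Type*) [SeminormedAddCommGroup Y] [NormedSpace ℝ Y] (N : Y → ℝ) : Prop :=
  (∀ x y : Y, N (x + y) ≤ N x + N y) ∧ (∀ (c : ℝ) (x : Y), N (c • x) = |c| * N x) ∧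
  ∃ a b : ℝ, 0 < a ∧ a ≤ b ∧ ∀ y : Y, a * ‖y‖ ≤ N y ∧ N y ≤ b * ‖y‖

def AdmitsBetaNorm (Y : Type*) [SeminormedAddCommGroup Y] [NormedSpace ℝ Y] : Prop :=
  ∃ N : Y → ℝ, IsEquivNorm Y N ∧ ∀ t : ℝ, 0 < t → t ≤ 2 → 0 < rolewiczModN N t

def AdmitsBetaPNorm (Y : Type*) [SeminormedAddCommGroup Y] [NormedSpace ℝ Y] (p γ : ℝ) : Prop :=
  ∃ N : Y → ℝ, IsEquivNorm Y N ∧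
    ∀ t : ℝ, 0 < t → t ≤ 2 → (rolewiczSetN N t).Nonempty → γ * t ^ p ≤ rolewiczModN N t
lemma fork_lemma {X : Type*} [NormedAddCommGroup X] [NormedSpace ℝ X] {N : X → ℝ}
    (hN : IsEquivNorm X N) {p γ : ℝ} (hγ : 0 < γ)
    (hβ : ∀ t : ℝ, 0 < t → t ≤ 2 → (rolewiczSetN N t).Nonempty → γ * t ^ p ≤ rolewiczModN N t)
    {r τ : ℝ} (hr : 0 < r) (hτ : 0 < τ) (z a : X) (b : ℕ → X) (hz : N (z - a) ≤ r)
    (hb : ∀ i, N (b i - a) ≤ r) (hsep : ∀ i j, i ≠ j → τ * r ≤ N (b i - b j)) :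
    ∃ i, N (z - b i) ≤ r * (2 - γ * τ ^ p) := by
  obtain ⟨hadd, hsmul, α, β, hα, hαβ, hnorm⟩ := hN
  have hnn : ∀ x, 0 ≤ N x := fun x =>
    le_trans (mul_nonneg hα.le (norm_nonneg x)) (hnorm x).1
  have hneg : ∀ x, N (-x) = N x := fun x => by
    have := hsmul (-1) x
    simpa using this
  have hsc : ∀ x, N (r⁻¹ • x) = N x / r := fun x => by
    rw [hsmul, abs_of_pos (inv_pos.2 hr)]; field_simp
  have hsub : ∀ x y, N (x - y) ≤ N x + N y := fun x y => by
    have := hadd x (-y)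
    rwa [hneg, ← sub_eq_add_neg] at this
  have hτ2 : τ ≤ 2 := by
    have h1 := hsep 0 1 (by norm_num)
    have h2 := hsub (b 0 - a) (b 1 - a)
    rw [sub_sub_sub_cancel_right] at h2
    have h3 := hb 0
    have h4 := hb 1
    by_contra h
    push Not at h
    nlinarith
  have hbdd : BddAbove (rolewiczSetN N τ) := by
    refine ⟨1, ?_⟩
    rintro s ⟨x, hx, y, hy, -, rfl⟩
    refine (ciInf_le ⟨0, ?_⟩ 0).trans ?_
    · rintro _ ⟨i, rfl⟩
      exact div_nonneg (hnn _) (by norm_num)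
    · have := hsub x (y 0)
      have := hy 0
      linarith
  have hmem : (⨅ i, N (r⁻¹ • (z - a) - r⁻¹ • (b i - a)) / 2) ∈ rolewiczSetN N τ := by
    refine ⟨r⁻¹ • (z - a), ?_, fun i => r⁻¹ • (b i - a), ?_, ?_, rfl⟩
    · rw [hsc, div_le_one hr]; exact hz
    · intro i
      rw [hsc, div_le_one hr]; exact hb i
    · intro n m hnm
      rw [← smul_sub, sub_sub_sub_cancel_right, hsc, le_div_iff₀ hr]
      exact hsep n m hnm
  have h1 := hβ τ hτ hτ2 ⟨_, hmem⟩
  have h2 := le_csSup hbdd hmem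
  unfold rolewiczModN at h1
  have hpos : 0 < γ * τ ^ p := mul_pos hγ (Real.rpow_pos_of_pos hτ p)
  have h3 : (⨅ i, N (r⁻¹ • (z - a) - r⁻¹ • (b i - a)) / 2) < 1 - γ * τ ^ p / 2 := by linarith
  obtain ⟨i, hi⟩ := exists_lt_of_ciInf_lt h3
  refine ⟨i, ?_⟩
  rw [← smul_sub, sub_sub_sub_cancel_right, hsc] at hi
  have h4 : N (z - b i) / r < 2 - γ * τ ^ p := by linarith
  rw [div_lt_iff₀ hr] at h4
  linarith

lemma improve_lemma {X : Type*} [NormedAddCommGroup X] [NormedSpace ℝ X] {N : X → ℝ}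
    (hN : IsEquivNorm X N) {p γ : ℝ} (hγ : 0 < γ)
    (hβ : ∀ t : ℝ, 0 < t → t ≤ 2 → (rolewiczSetN N t).Nonempty → γ * t ^ p ≤ rolewiczModN N t)
    {V : Type*} [NormedAddCommGroup V] [NormedSpace ℝ V] {q : ℝ}
    {T : Type*} (ι : T → X) (h : T → V) {L K' c0 t η : ℝ} (hL : 0 < L) (hc0 : 0 < c0)
    (hLip : ∀ z a, ‖h z - h a‖ ≤ L * N (ι z - ι a) + K') (ht : 0 < t)
    (hV : ∀ u : V, ‖u‖ = 1 → ∃ e : ℕ → V, (∀ i, ‖u + t • e i‖ ≤ 1 + 2 * t ^ q ∧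
      ‖u - t • e i‖ ≤ 1 + 2 * t ^ q) ∧ ∀ i j, i ≠ j → 1 ≤ ‖e i - e j‖)
    (hη : η = γ * (t / (8 * L * c0)) ^ p / 6) (htη : 3 * t ^ q ≤ η) (htq : t ^ q ≤ 1)
    {c K : ℝ} (hc : 0 < c) (hcc : c ≤ c0)
    (hlift : ∀ z y, ∃ a, h a = y ∧ N (ι z - ι a) ≤ c * ‖y - h z‖ + K) :
    ∃ K2, ∀ z y, ∃ a, h a = y ∧ N (ι z - ι a) ≤ (c * (1 - η)) * ‖y - h z‖ + K2 := by
  have htq0 : 0 < t ^ q := Real.rpow_pos_of_pos ht q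
  have hηpos : 0 < η := by linarith
  obtain ⟨d0, hd0, hd1, hd2⟩ : ∃ d0 : ℝ, 0 < d0 ∧ K ≤ c * d0 * t ^ q ∧ 2 * K' ≤ d0 * t := by
    refine ⟨|K| / (c * t ^ q) + 2 * |K'| / t + 1, by positivity, ?_, ?_⟩
    · have e : c * (|K| / (c * t ^ q) + 2 * |K'| / t + 1) * t ^ q
          = |K| + c * (2 * |K'| / t + 1) * t ^ q := by field_simp; ring
      rw [e]
      have : 0 ≤ c * (2 * |K'| / t + 1) * t ^ q := by positivity
      linarith [le_abs_self K]
    · have e : (|K| / (c * t ^ q) + 2 * |K'| / t + 1) * t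
          = 2 * |K'| + (|K| / (c * t ^ q) + 1) * t := by field_simp; ring
      rw [e]
      have : 0 ≤ (|K| / (c * t ^ q) + 1) * t := by positivity
      linarith [le_abs_self K']
  refine ⟨3 * c * d0 + |K| + c * |1 - η| * (3 * d0), fun z y => ?_⟩
  rcases lt_or_ge ‖y - h z‖ (3 * d0) with hsmall | hlarge
  · obtain ⟨a, ha, hza⟩ := hlift z y
    refine ⟨a, ha, hza.trans ?_⟩
    have h1 : c * ‖y - h z‖ ≤ 3 * c * d0 := by nlinarith
    have h2 : -(c * |1 - η| * (3 * d0)) ≤ c * (1 - η) * ‖y - h z‖ := by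
      have h3 : c * |1 - η| * ‖y - h z‖ ≤ c * |1 - η| * (3 * d0) :=
        mul_le_mul_of_nonneg_left hsmall.le (by positivity)
      have h4 : -(c * |1 - η| * ‖y - h z‖) ≤ c * (1 - η) * ‖y - h z‖ := by
        have h5 : 0 ≤ (c * ‖y - h z‖) * (|1 - η| + (1 - η)) :=
          mul_nonneg (by positivity) (by linarith [neg_abs_le (1 - η)])
        nlinarith
      linarith
    linarith [le_abs_self K]
  · obtain ⟨d, hd⟩ : ∃ d, ‖y - h z‖ = 3 * d := ⟨‖y - h z‖ / 3, by ring⟩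
    have hdd : d0 ≤ d := by linarith
    have hdp : 0 < d := by linarith
    set w := y - h z with hw
    set u : V := (3 * d)⁻¹ • w with hu
    have hwu : w = (3 * d) • u := by
      rw [hu, smul_smul, mul_inv_cancel₀ (by positivity), one_smul]
    have hy : y = h z + (3 * d) • u := by rw [← hwu, hw]; abel
    have hu1 : ‖u‖ = 1 := by
      rw [hu, norm_smul, hd, norm_inv, Real.norm_of_nonneg (by positivity)]
      field_simp
    obtain ⟨e, he, hesep⟩ := hV u hu1
    have hK : K ≤ c * d * t ^ q := hd1.trans (by gcongr)
    have hK' : 2 * K' ≤ d * t := hd2.trans (by gcongr)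
    set r := c * d * (1 + 3 * t ^ q) with hr
    have hrpos : 0 < r := by positivity
    have hcost : ∀ v : V, ‖v‖ ≤ 1 + 2 * t ^ q → c * ‖d • v‖ + K ≤ r := by
      intro v hv
      rw [norm_smul, Real.norm_of_nonneg hdp.le]
      have : c * (d * ‖v‖) ≤ c * (d * (1 + 2 * t ^ q)) := by gcongr
      rw [hr]; nlinarith
    obtain ⟨a, ha, hza⟩ := hlift z (h z + d • u)
    have hza' : N (ι z - ι a) ≤ r := by
      refine hza.trans ?_
      rw [add_sub_cancel_left]
      exact hcost u (by rw [hu1]; linarith)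
    have hbex : ∀ i, ∃ b, h b = h z + (2 * d) • u + (d * t) • e i ∧ N (ι a - ι b) ≤ r := by
      intro i
      obtain ⟨b, hb, hab⟩ := hlift a (h z + (2 * d) • u + (d * t) • e i)
      refine ⟨b, hb, hab.trans ?_⟩
      have : h z + (2 * d) • u + (d * t) • e i - h a = d • (u + t • e i) := by
        rw [ha]; module
      rw [this]
      exact hcost _ (he i).1
    choose b hb hab using hbex
    have hneg : ∀ x, N (-x) = N x := fun x => by
      have := hN.2.1 (-1) x
      simpa using this
    have hτ : 0 < t / (8 * L * c0) := by positivity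
    obtain ⟨i, hi⟩ := fork_lemma hN hγ hβ hrpos hτ (ι z) (ι a) (fun i => ι (b i)) hza'
      (fun i => by rw [← hneg, neg_sub]; exact hab i) (by
        intro i j hij
        have h1 := hLip (b i) (b j)
        have h2 : h (b i) - h (b j) = (d * t) • (e i - e j) := by
          rw [hb, hb]; module
        rw [h2, norm_smul, Real.norm_of_nonneg (by positivity)] at h1
        have h3 : d * t * 1 ≤ d * t * ‖e i - e j‖ := by gcongr; exact hesep i j hij
        have h4 : d * t / 2 ≤ L * N (ι (b i) - ι (b j)) := by linarith
        have h5 : r ≤ 4 * c0 * d := by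
          have : c * d * (1 + 3 * t ^ q) ≤ c0 * d * (1 + 3 * 1) := by gcongr
          rw [hr]; linarith
        have h6 : t / (8 * L * c0) * r ≤ t / (8 * L * c0) * (4 * c0 * d) := by gcongr
        have h7 : t / (8 * L * c0) * (4 * c0 * d) = (d * t / 2) / L := by field_simp; norm_num
        rw [h7] at h6
        refine h6.trans ?_
        rw [div_le_iff₀ hL]; linarith)
    obtain ⟨k, hk, hbk⟩ := hlift (b i) y
    refine ⟨k, hk, ?_⟩
    have hbk' : N (ι (b i) - ι k) ≤ r := by
      refine hbk.trans ?_
      have : y - h (b i) = d • (u - t • e i) := by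
        rw [hb, hy]; module
      rw [this]
      exact hcost _ (he i).2
    have htri : N (ι z - ι k) ≤ N (ι z - ι (b i)) + N (ι (b i) - ι k) := by
      have := hN.1 (ι z - ι (b i)) (ι (b i) - ι k)
      rwa [sub_add_sub_cancel] at this
    have h6η : γ * (t / (8 * L * c0)) ^ p = 6 * η := by rw [hη]; ring
    rw [h6η] at hi
    have hnn : 0 ≤ N (ι z - ι (b i)) := by
      obtain ⟨-, -, α, β, hα, hαβ, hnorm⟩ := hN
      exact le_trans (mul_nonneg hα.le (norm_nonneg _)) (hnorm _).1
    have h26 : 0 ≤ 2 - 6 * η := by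
      by_contra hcon
      push Not at hcon
      have : r * (2 - 6 * η) < 0 := mul_neg_of_pos_of_neg hrpos hcon
      linarith
    have hr2 : r * (3 - 6 * η) ≤ c * d * (1 + η) * (3 - 6 * η) := by
      rw [hr]
      have : 0 ≤ 3 - 6 * η := by linarith
      gcongr
    have hfin : c * d * (1 + η) * (3 - 6 * η) ≤ c * (1 - η) * (3 * d) := by
      have : 0 ≤ c * d * η ^ 2 := by positivity
      nlinarith
    rw [hd]
    have : 0 ≤ 3 * c * d0 + |K| + c * |1 - η| * (3 * d0) := by positivity
    linarith

lemma affine_of_uq {E : Type*} [NormedAddCommGroup E] {V : Type*} [NormedAddCommGroup V]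
    [NormedSpace ℝ V] {Z : Set E} {f : Z → V}
    (h1 : UniformQuotientMap (fun a b : Z => dist a.1 b.1) (fun a b : V => ‖a - b‖) f)
    (h2 : LipLargeDist (fun a b : Z => dist a.1 b.1) (fun a b : V => ‖a - b‖) f) :
    (∃ c K : ℝ, 0 < c ∧ 0 < K ∧ ∀ z y, ∃ a, f a = y ∧ ‖z.1 - a.1‖ ≤ c * ‖y - f z‖ + K) ∧
    (∃ L K : ℝ, 0 < L ∧ 0 < K ∧ ∀ z a, ‖f z - f a‖ ≤ L * ‖z.1 - a.1‖ + K) := by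
  obtain ⟨-, ρ, ω, hρm, hωm, hρ, hω, -, h⟩ := h1
  constructor
  · have hρ1 := hρ 1 one_pos
    refine ⟨(ρ 1)⁻¹, 1, inv_pos.2 hρ1, one_pos, ?_⟩
    have key : ∀ n : ℕ, ∀ z y, ‖y - f z‖ ≤ n * ρ 1 → ∃ a, f a = y ∧ ‖z.1 - a.1‖ ≤ n := by
      intro n
      induction n with
      | zero =>
        intro z y hy
        have : y - f z = 0 := by simpa using hy
        exact ⟨z, (sub_eq_zero.1 this).symm, by simp⟩
      | succ n ih =>
        intro z y hy
        have hn : (0 : ℝ) < n + 1 := by positivity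
        push_cast at hy
        obtain ⟨a, ha, hfa⟩ := (h z 1 one_pos).1 (f z + ((n : ℝ) + 1)⁻¹ • (y - f z)) (by
          show ‖_‖ ≤ _
          rw [sub_add_cancel_left, norm_neg, norm_smul, norm_inv, Real.norm_of_nonneg hn.le,
            inv_mul_le_iff₀ hn]
          exact hy)
        obtain ⟨k, hk, hak⟩ := ih a y (by
          have : y - f a = ((n : ℝ) / (n + 1)) • (y - f z) := by
            rw [hfa]
            have : (n : ℝ) / (n + 1) = 1 - ((n : ℝ) + 1)⁻¹ := by field_simp; ring
            rw [this]; module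
          rw [this, norm_smul, Real.norm_of_nonneg (by positivity)]
          calc (n : ℝ) / (n + 1) * ‖y - f z‖ ≤ (n : ℝ) / (n + 1) * ((n + 1) * ρ 1) := by gcongr
            _ = n * ρ 1 := by field_simp)
        refine ⟨k, hk, ?_⟩
        have h3 : ‖z.1 - k.1‖ ≤ ‖z.1 - a.1‖ + ‖a.1 - k.1‖ := norm_sub_le_norm_sub_add_norm_sub _ _ _
        have h4 : ‖z.1 - a.1‖ ≤ 1 := by rw [← dist_eq_norm]; exact ha
        push_cast
        linarith
    intro z y
    obtain ⟨a, ha, hza⟩ := key ⌈‖y - f z‖ / ρ 1⌉₊ z y (by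
      rw [← div_le_iff₀ hρ1]; exact Nat.le_ceil _)
    refine ⟨a, ha, hza.trans ?_⟩
    have := (Nat.ceil_lt_add_one (a := ‖y - f z‖ / ρ 1) (by positivity)).le
    rw [inv_mul_eq_div]; exact this
  · obtain ⟨M, hM⟩ := h2 1 one_pos
    refine ⟨|M| + 1, ω 1, by positivity, hω 1 one_pos, fun z a => ?_⟩
    rcases le_total 1 (dist z.1 a.1) with hd | hd
    · have h3 : ‖f z - f a‖ ≤ M * dist z.1 a.1 := hM z a hd
      have h4 : M * dist z.1 a.1 ≤ (|M| + 1) * dist z.1 a.1 := by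
        gcongr; linarith [le_abs_self M]
      rw [dist_eq_norm] at h3 h4
      linarith [hω 1 one_pos]
    · have h3 : ‖f z - f a‖ ≤ ω 1 := (h z 1 one_pos).2 a hd
      have : 0 ≤ (|M| + 1) * ‖z.1 - a.1‖ := by positivity
      linarith

lemma lp_fork {q : ℝ} (hq : 1 < q) [Fact (1 ≤ ENNReal.ofReal q)] {t : ℝ} (ht : 0 < t)
    (u : lp (fun _ : ℕ => ℝ) (ENNReal.ofReal q)) (hu : ‖u‖ = 1) :
    ∃ e : ℕ → lp (fun _ : ℕ => ℝ) (ENNReal.ofReal q), (∀ i, ‖u + t • e i‖ ≤ 1 + 2 * t ^ q ∧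
      ‖u - t • e i‖ ≤ 1 + 2 * t ^ q) ∧ ∀ i j, i ≠ j → 1 ≤ ‖e i - e j‖ := by
  have hq0 : 0 < q := by linarith
  have hqr : (ENNReal.ofReal q).toReal = q := ENNReal.toReal_ofReal hq0.le
  have hqp : 0 < (ENNReal.ofReal q).toReal := by rw [hqr]; exact hq0
  have htq0 : 0 < t ^ q := Real.rpow_pos_of_pos ht q
  have hsum : Summable fun i => ‖u i‖ ^ q := by
    have := (lp.memℓp u).summable hqp
    rwa [hqr] at this
  have hu0 : Tendsto (fun i => ‖u i‖) atTop (nhds 0) := by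
    have h1 := hsum.tendsto_atTop_zero
    have h2 := h1.rpow_const (p := q⁻¹) (Or.inr (by positivity))
    rw [Real.zero_rpow (by positivity)] at h2
    refine h2.congr fun i => ?_
    exact Real.rpow_rpow_inv (norm_nonneg _) hq0.ne'
  have hu1 : Tendsto (fun i => (‖u i‖ + t) ^ q) atTop (nhds (t ^ q)) := by
    have := (hu0.add_const t).rpow_const (p := q) (Or.inr hq0.le)
    simpa using this
  obtain ⟨n0, hn0⟩ := eventually_atTop.1 (hu1.eventually_lt_const (show t ^ q < 2 * t ^ q by linarith))
  have key : ∀ s : ℝ, |s| = t → ∀ i, n0 ≤ i →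
      ‖u + s • lp.single (E := fun _ : ℕ => ℝ) (ENNReal.ofReal q) i (1 : ℝ)‖ ≤ 1 + 2 * t ^ q := by
    intro s hs i hi
    set f := u + s • lp.single (E := fun _ : ℕ => ℝ) (ENNReal.ofReal q) i (1 : ℝ) with hf
    have hfk : ∀ k, f k = u k + s * (Pi.single i (1 : ℝ) : ℕ → ℝ) k := fun k => rfl
    have hfi : f i = u i + s := by rw [hfk]; simp
    have h1 := lp.norm_sub_norm_compl_sub_single hqp f {i}
    have h2 := lp.norm_sub_norm_compl_sub_single hqp u {i}
    rw [Finset.sum_singleton, Finset.sum_singleton] at h1 h2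
    have h3 : f - lp.single (ENNReal.ofReal q) i (f i) = u - lp.single (ENNReal.ofReal q) i (u i) := by
      ext k
      show f k - (Pi.single i (f i) : ℕ → ℝ) k = u k - (Pi.single i (u i) : ℕ → ℝ) k
      by_cases hk : k = i
      · subst hk; simp
      · rw [hfk]; simp [hk]
    rw [h3] at h1
    rw [hqr] at h1 h2
    rw [hu, Real.one_rpow] at h2
    have h4 : ‖f i‖ ^ q ≤ 2 * t ^ q := by
      refine le_trans ?_ (hn0 i hi).le
      apply Real.rpow_le_rpow (norm_nonneg _) _ hq0.le
      rw [hfi, ← hs]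
      exact norm_add_le _ _
    have h5 : 0 ≤ ‖u i‖ ^ q := by positivity
    have h6 : ‖f‖ ^ q ≤ 1 + 2 * t ^ q := by linarith
    have h7 : 1 + 2 * t ^ q ≤ (1 + 2 * t ^ q) ^ q :=
      Real.self_le_rpow_of_one_le (by linarith) hq.le
    exact (Real.rpow_le_rpow_iff (norm_nonneg _) (by positivity) hq0).1 (h6.trans h7)
  refine ⟨fun i => lp.single (E := fun _ : ℕ => ℝ) (ENNReal.ofReal q) (n0 + i) (1 : ℝ), fun i => ⟨?_, ?_⟩, ?_⟩
  · exact key t (abs_of_pos ht) _ (by omega)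
  · have := key (-t) (by rw [abs_neg, abs_of_pos ht]) (n0 + i) (by omega)
    rwa [neg_smul, ← sub_eq_add_neg] at this
  · intro i j hij
    have h0 : ENNReal.ofReal q ≠ 0 := by simpa using hq0
    have := lp.norm_apply_le_norm h0 (lp.single (E := fun _ : ℕ => ℝ) (ENNReal.ofReal q) (n0 + i) (1 : ℝ)
      - lp.single (E := fun _ : ℕ => ℝ) (ENNReal.ofReal q) (n0 + j) (1 : ℝ)) (n0 + i)
    simpa [lp.single_apply, Pi.single_apply, hij] using this

/-- Theorem 4.11: if `X` admits an equivalent norm with property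
(β_p) and a Banach space `Y` is a uniform subquotient of `X` via a map Lipschitz
for large distances, then for `q > p` the space `ℓ_q` is not a uniform subquotient
of `Y` via a map Lipschitz for large distances. -/
theorem beta_p_uniform_subquotient
    (p γ : ℝ) (hp : 1 < p) (hγ : 0 < γ)
    (X : Type*) [NormedAddCommGroup X] [NormedSpace ℝ X] [CompleteSpace X]
    (hX : AdmitsBetaPNorm X p γ)
    (Y : Type*) [NormedAddCommGroup Y] [NormedSpace ℝ Y] [CompleteSpace Y]
    (hY : ∃ (Z : Set X) (f : Z → Y),
      UniformQuotientMap (fun a b : Z => dist a.1 b.1) (fun a b : Y => dist a b) f ∧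
      LipLargeDist (fun a b : Z => dist a.1 b.1) (fun a b : Y => dist a b) f) :
    ∀ q : ℝ, p < q →
      ¬ ∃ (W : Set Y) (g : W → lp (fun _ : ℕ => ℝ) (ENNReal.ofReal q)),
        UniformQuotientMap (fun a b : W => dist a.1 b.1)
          (fun a b : lp (fun _ : ℕ => ℝ) (ENNReal.ofReal q) => ‖a - b‖) g ∧
        LipLargeDist (fun a b : W => dist a.1 b.1)
          (fun a b : lp (fun _ : ℕ => ℝ) (ENNReal.ofReal q) => ‖a - b‖) g := by
  intro q hpq
  rintro ⟨W, g, hg1, hg2⟩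
  obtain ⟨Z, f, hf1, hf2⟩ := hY
  obtain ⟨N, hN, hβ⟩ := hX
  have hq : 1 < q := hp.trans hpq
  have : Fact (1 ≤ ENNReal.ofReal q) := ⟨by
    rw [← ENNReal.ofReal_one]; exact ENNReal.ofReal_le_ofReal hq.le⟩
  simp only [dist_eq_norm (E := Y)] at hf1 hf2
  obtain ⟨z0, hz0⟩ := hg1.1 0
  obtain ⟨z1, hz1⟩ := hf1.1 z0.1
  obtain ⟨⟨c1, K1, hc1, hK1, hl1⟩, ⟨L1, M1, hL1, hM1, hm1⟩⟩ := affine_of_uq hf1 hf2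
  obtain ⟨⟨c2, K2, hc2, hK2, hl2⟩, ⟨L2, M2, hL2, hM2, hm2⟩⟩ := affine_of_uq hg1 hg2
  have hN' := hN
  obtain ⟨-, -, α, β, hα, hαβ, hnorm⟩ := hN'
  have hβp : 0 < β := hα.trans_le hαβ
  let T := {z : Z // f z ∈ W}
  let ι : T → X := fun z => z.1.1
  let h : T → lp (fun _ : ℕ => ℝ) (ENNReal.ofReal q) := fun z => g ⟨f z.1, z.2⟩
  obtain ⟨c0, hc0, hlift0⟩ : ∃ c0, 0 < c0 ∧ ∃ K, ∀ z y, ∃ a, h a = y ∧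
      N (ι z - ι a) ≤ c0 * ‖y - h z‖ + K := by
    refine ⟨β * c1 * c2, by positivity, β * (c1 * K2 + K1), fun z y => ?_⟩
    obtain ⟨w, hw, hzw⟩ := hl2 ⟨f z.1, z.2⟩ y
    obtain ⟨a, ha, hza⟩ := hl1 z.1 w.1
    refine ⟨⟨a, by rw [ha]; exact w.2⟩, ?_, ?_⟩
    · rw [← hw]
      show g _ = g _
      congr 1
      exact Subtype.ext ha
    · refine (hnorm _).2.trans ?_
      rw [norm_sub_rev] at hzw
      calc β * ‖z.1.1 - a.1‖ ≤ β * (c1 * (c2 * ‖y - h z‖ + K2) + K1) := by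
            gcongr
            exact hza.trans (by gcongr)
        _ = _ := by ring
  obtain ⟨L, K', hL, hLip⟩ : ∃ L K', 0 < L ∧ ∀ z a, ‖h z - h a‖ ≤ L * N (ι z - ι a) + K' := by
    refine ⟨L2 * L1 / α, L2 * M1 + M2, by positivity, fun z a => ?_⟩
    have h1 := hm2 ⟨f z.1, z.2⟩ ⟨f a.1, a.2⟩
    have h2 := hm1 z.1 a.1
    have h3 : ‖ι z - ι a‖ ≤ N (ι z - ι a) / α := by
      rw [le_div_iff₀ hα, mul_comm]; exact (hnorm _).1
    calc ‖h z - h a‖ ≤ L2 * ‖f z.1 - f a.1‖ + M2 := h1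
      _ ≤ L2 * (L1 * (N (ι z - ι a) / α) + M1) + M2 := by
          gcongr
          exact h2.trans (by gcongr)
      _ = _ := by ring
  have hlow : ∀ c, (∃ K, ∀ z y, ∃ a, h a = y ∧ N (ι z - ι a) ≤ c * ‖y - h z‖ + K) →
      1 ≤ L * c := by
    rintro c ⟨K, hK⟩
    by_contra hcon
    push Not at hcon
    let zz : T := ⟨z1, by rw [hz1]; exact z0.2⟩
    set R : ℝ := (|L * K + K'| + 1) / (1 - L * c) with hR
    have hRpos : 0 < R := div_pos (by positivity) (by linarith)
    let v := lp.single (E := fun _ : ℕ => ℝ) (ENNReal.ofReal q) 0 R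
    have hv : ‖v‖ = R := by
      rw [lp.norm_single (by simpa using (by linarith : 0 < q)), Real.norm_of_nonneg hRpos.le]
    obtain ⟨a, ha, hza⟩ := hK zz (h zz + v)
    have h1 := hLip zz a
    rw [ha, sub_add_cancel_left, norm_neg, hv] at h1
    rw [add_sub_cancel_left, hv] at hza
    have h2 : L * N (ι zz - ι a) ≤ L * (c * R + K) := by gcongr
    have h3 : R * (1 - L * c) = |L * K + K'| + 1 := by
      rw [hR]; field_simp [(by linarith : (1 - L * c) ≠ 0)]
    linarith [le_abs_self (L * K + K')]
  set κ : ℝ := 1 / (8 * L * c0) with hκ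
  have hκp : 0 < κ := by positivity
  have hA : 0 < γ * κ ^ p / 18 := by
    have := Real.rpow_pos_of_pos hκp p
    positivity
  obtain ⟨t, ht, ht1, htt⟩ : ∃ t : ℝ, 0 < t ∧ t ≤ 1 ∧ t ^ (q - p) ≤ γ * κ ^ p / 18 := by
    refine ⟨min 1 ((γ * κ ^ p / 18) ^ (q - p)⁻¹), lt_min one_pos (Real.rpow_pos_of_pos hA _),
      min_le_left _ _, ?_⟩
    calc _ ≤ ((γ * κ ^ p / 18) ^ (q - p)⁻¹) ^ (q - p) :=
          Real.rpow_le_rpow (lt_min one_pos (Real.rpow_pos_of_pos hA _)).le (min_le_right _ _)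
            (by linarith)
      _ = _ := Real.rpow_inv_rpow hA.le (by linarith)
  obtain ⟨η, hη⟩ : ∃ η, η = γ * (t / (8 * L * c0)) ^ p / 6 := ⟨_, rfl⟩
  have htq1 : t ^ q ≤ 1 := Real.rpow_le_one ht.le ht1 (by linarith)
  have htp := Real.rpow_pos_of_pos ht p
  have htη : 3 * t ^ q ≤ η := by
    have e1 : t / (8 * L * c0) = κ * t := by rw [hκ]; ring
    have e2 : t ^ q = t ^ (q - p) * t ^ p := by
      rw [← Real.rpow_add ht]; congr 1; ring
    rw [hη, e1, Real.mul_rpow hκp.le ht.le, e2]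
    have := mul_le_mul_of_nonneg_right htt htp.le
    linarith
  have hηpos : 0 < η := lt_of_lt_of_le (by have := Real.rpow_pos_of_pos ht q; positivity) htη
  have hiter : ∀ n : ℕ, (∃ K, ∀ z y, ∃ a, h a = y ∧
      N (ι z - ι a) ≤ (c0 * (1 - η) ^ n) * ‖y - h z‖ + K) ∧ c0 * (1 - η) ^ n ≤ c0 := by
    intro n
    induction n with
    | zero => simpa using hlift0
    | succ n ih =>
      obtain ⟨⟨K, hK⟩, hle⟩ := ih
      have hpos : 0 < c0 * (1 - η) ^ n := by
        have := hlow _ ⟨K, hK⟩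
        by_contra hcon
        push Not at hcon
        nlinarith
      have := improve_lemma hN hγ hβ ι h hL hc0 hLip ht (q := q) (fun u hu => lp_fork hq ht u hu)
        hη htη htq1 hpos hle hK
      rw [pow_succ, ← mul_assoc]
      exact ⟨this, by nlinarith⟩
  have hη1 : 0 < 1 - η := by
    have := hlow _ (hiter 1).1
    by_contra hcon
    push Not at hcon
    have : c0 * (1 - η) ^ 1 ≤ 0 := by rw [pow_one]; exact mul_nonpos_of_nonneg_of_nonpos hc0.le hcon
    nlinarith
  obtain ⟨n, hn⟩ := exists_pow_lt_of_lt_one (show 0 < 1 / (L * c0) by positivity)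
    (show 1 - η < 1 by linarith)
  have h1 := hlow _ (hiter n).1
  rw [lt_div_iff₀ (by positivity)] at hn
  nlinarith

end
end

section
/- Let X be a real Banach space admitting an equivalent norm with property (β). Then c₀ is not a uniform subquotient of X via a uniform quotient map that is Lipschitz for large distances; that is, there is no subset Z ⊆ X and surjective uniform quotient map f : Z → c₀ that is Lipschitz for large distances. -/
open Set Function Filter

open scoped ENNReal

attribute [local instance] Classical.propDecidable

noncomputable section

theorem treeFun_finite (c : ℝ) (s : List ℕ) :
    (Function.support (fun k : ℕ => if ((Denumerable.eqv (List ℕ)).symm k) ≠ [] ∧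
      ((Denumerable.eqv (List ℕ)).symm k) <:+ s then
      c * ((s.length : ℝ) + 1 - (((Denumerable.eqv (List ℕ)).symm k).length : ℝ)) else 0)).Finite := by
  apply Set.Finite.subset ((s.tails.toFinset.image (Denumerable.eqv (List ℕ))).finite_toSet)
  intro k hk
  have h : ((Denumerable.eqv (List ℕ)).symm k) ≠ [] ∧
      ((Denumerable.eqv (List ℕ)).symm k) <:+ s := by
    by_contra h
    exact hk (if_neg h)
  simp only [Finset.coe_image, Set.mem_image, Finset.mem_coe, List.mem_toFinset, List.mem_tails]
  exact ⟨_, h.2, by simp⟩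

/-- Embedding of the countably branching tree into `c₀` (scaled by `c`). -/
def treeP (c : ℝ) (s : List ℕ) : ZeroAtInftyContinuousMap ℕ ℝ where
  toFun := fun k : ℕ => if ((Denumerable.eqv (List ℕ)).symm k) ≠ [] ∧
      ((Denumerable.eqv (List ℕ)).symm k) <:+ s then
      c * ((s.length : ℝ) + 1 - (((Denumerable.eqv (List ℕ)).symm k).length : ℝ)) else 0
  continuous_toFun := continuous_of_discreteTopology
  zero_at_infty' := by
    rw [Filter.cocompact_eq_cofinite]
    apply tendsto_const_nhds.congr'
    have := (treeFun_finite c s).compl_mem_cofinite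
    filter_upwards [this] with k hk
    by_contra h
    exact hk (fun hh => h hh.symm)

theorem treeP_apply (c : ℝ) (s : List ℕ) (k : ℕ) :
    treeP c s k = if ((Denumerable.eqv (List ℕ)).symm k) ≠ [] ∧
      ((Denumerable.eqv (List ℕ)).symm k) <:+ s then
      c * ((s.length : ℝ) + 1 - (((Denumerable.eqv (List ℕ)).symm k).length : ℝ)) else 0 := rfl

theorem treeP_child (c : ℝ) (hc : 0 ≤ c) (s : List ℕ) (n : ℕ) :
    dist (treeP c s) (treeP c (n :: s)) ≤ c := by
  rw [← ZeroAtInftyContinuousMap.dist_toBCF_eq_dist, BoundedContinuousFunction.dist_le hc]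
  intro k
  change dist (treeP c s k) (treeP c (n :: s) k) ≤ c
  rw [treeP_apply, treeP_apply]
  generalize (Denumerable.eqv (List ℕ)).symm k = σ
  rw [Real.dist_eq]
  by_cases h0 : σ = []
  · simp [h0, hc]
  by_cases h1 : σ <:+ s
  · have h2 : σ <:+ n :: s := h1.trans (List.suffix_cons n s)
    rw [if_pos ⟨h0, h1⟩, if_pos ⟨h0, h2⟩, List.length_cons]
    push_cast
    rw [show c * ((s.length : ℝ) + 1 - σ.length) - c * ((s.length : ℝ) + 1 + 1 - σ.length) = -c by ring,
      abs_neg, abs_of_nonneg hc]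
  · by_cases h2 : σ <:+ n :: s
    · have h3 : σ = n :: s := by
        rcases List.suffix_cons_iff.1 h2 with h | h
        · exact h
        · exact absurd h h1
      rw [if_neg (fun h => h1 h.2), if_pos ⟨h0, h2⟩, h3, List.length_cons]
      push_cast
      rw [show 0 - c * ((s.length : ℝ) + 1 + 1 - (s.length + 1)) = -c by ring,
        abs_neg, abs_of_nonneg hc]
    · rw [if_neg (fun h => h1 h.2), if_neg (fun h => h2 h.2)]
      simpa using hc

theorem treeP_sep (c : ℝ) (s u v : List ℕ) (j : ℕ) (hv : ¬ (j :: s) <:+ v) :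
    c * ((u.length : ℝ) + 1) ≤ dist (treeP c (u ++ j :: s)) (treeP c v) := by
  have h := BoundedContinuousFunction.dist_coe_le_dist
    (f := (treeP c (u ++ j :: s)).toBCF) (g := (treeP c v).toBCF)
    (Denumerable.eqv (List ℕ) (j :: s))
  rw [ZeroAtInftyContinuousMap.dist_toBCF_eq_dist] at h
  refine le_trans ?_ h
  change _ ≤ dist (treeP c (u ++ j :: s) _) (treeP c v _)
  rw [treeP_apply, treeP_apply, Equiv.symm_apply_apply, if_pos ⟨by simp, List.suffix_append _ _⟩,
    if_neg (fun h => hv h.2), Real.dist_eq]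
  refine le_trans (le_of_eq ?_) (le_abs_self _)
  simp only [List.length_append, List.length_cons]
  push_cast
  ring

theorem beta_fork {X : Type*} [NormedAddCommGroup X] [NormedSpace ℝ X] {N : X → ℝ}
    (hadd : ∀ x y : X, N (x + y) ≤ N x + N y) (hsm : ∀ (c : ℝ) (x : X), N (c • x) = |c| * N x)
    (h0 : ∀ x, 0 ≤ N x) {t q D : ℝ} (hD : 0 < D) (hq : 1 - rolewiczModN N t < q)
    (x z : X) (w : ℕ → X) (hxz : N (x - z) ≤ D) (hw : ∀ i, N (w i - z) ≤ D)
    (hsep : ∀ n m, n ≠ m → t * D ≤ N (w n - w m)) : ∃ i, N (x - w i) ≤ 2 * D * q := by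
  have hsc : ∀ y, N (D⁻¹ • y) = N y / D := fun y => by
    rw [hsm, abs_of_pos (inv_pos.2 hD)]; field_simp
  have hneg : ∀ y, N (-y) = N y := fun y => by
    have := hsm (-1) y
    simpa using this
  have hmem : (⨅ i, N (D⁻¹ • (x - z) - D⁻¹ • (w i - z)) / 2) ∈ rolewiczSetN N t := by
    refine ⟨D⁻¹ • (x - z), ?_, fun i => D⁻¹ • (w i - z), ?_, ?_, rfl⟩
    · rw [hsc, div_le_one hD]; exact hxz
    · intro i; rw [hsc, div_le_one hD]; exact hw i
    · intro n m hnm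
      rw [← smul_sub, hsc, sub_sub_sub_cancel_right, le_div_iff₀ hD]
      exact hsep n m hnm
  have hbdd : BddAbove (rolewiczSetN N t) := by
    refine ⟨1, ?_⟩
    rintro _ ⟨x, hx, y, hy, -, rfl⟩
    have hb : BddBelow (Set.range fun i => N (x - y i) / 2) :=
      ⟨0, by rintro _ ⟨i, rfl⟩; exact div_nonneg (h0 _) (by norm_num)⟩
    refine (ciInf_le hb 0).trans ?_
    have := hadd x (-(y 0))
    rw [hneg, ← sub_eq_add_neg] at this
    have := hy 0
    linarith
  have hle := le_csSup hbdd hmem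
  have hlt : (⨅ i, N (D⁻¹ • (x - z) - D⁻¹ • (w i - z)) / 2) < q := by
    unfold rolewiczModN at hq
    linarith
  obtain ⟨i, hi⟩ := exists_lt_of_ciInf_lt hlt
  refine ⟨i, ?_⟩
  rw [← smul_sub, hsc, sub_sub_sub_cancel_right, div_div, div_lt_iff₀ (by positivity)] at hi
  linarith

/-- Theorem 4.12: `c₀` is not a uniform subquotient, via a uniform
quotient map that is Lipschitz for large distances, of any Banach space admitting
an equivalent norm with property (β). -/
theorem c0_not_uniform_subquotient
    (X : Type*) [NormedAddCommGroup X] [NormedSpace ℝ X] [CompleteSpace X]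
    (hX : AdmitsBetaNorm X) :
    ¬ ∃ (Z : Set X) (f : Z → ZeroAtInftyContinuousMap ℕ ℝ),
      UniformQuotientMap (fun a b : Z => dist a.1 b.1)
        (fun a b : ZeroAtInftyContinuousMap ℕ ℝ => dist a b) f ∧
      LipLargeDist (fun a b : Z => dist a.1 b.1)
        (fun a b : ZeroAtInftyContinuousMap ℕ ℝ => dist a b) f := by
  rintro ⟨Z, f, ⟨hsurj, ρ, ω, -, -, hρ, -, hω0, hf⟩, hlip⟩
  obtain ⟨N, ⟨hadd, hsm, a, b, ha, hab, hN⟩, hβ⟩ := hX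
  have hb : 0 < b := ha.trans_le hab
  have h0 : ∀ x, 0 ≤ N x := fun x => le_trans (by positivity) (hN x).1
  obtain ⟨c, hc⟩ : ∃ c, c = ρ 1 := ⟨_, rfl⟩
  have hcpos : 0 < c := hc ▸ hρ 1 one_pos
  -- lower bound on distances upstairs
  obtain ⟨M, hM, hMf⟩ : ∃ M : ℝ, 0 < M ∧ ∀ x y : Z, c ≤ dist (f x) (f y) →
      dist (f x) (f y) ≤ M * N (x.1 - y.1) := by
    have h1 : ∀ᶠ s in nhdsWithin 0 (Set.Ioi (0:ℝ)), ω s < c := hω0.eventually (gt_mem_nhds hcpos)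
    obtain ⟨s, hs, hs0⟩ := (h1.and self_mem_nhdsWithin).exists
    have hs0 : 0 < s := hs0
    obtain ⟨M, hM⟩ := hlip s hs0
    refine ⟨max M 1 / a, by positivity, fun x y hxy => ?_⟩
    have hd : s ≤ dist x.1 y.1 := by
      by_contra h
      push Not at h
      have := (hf x s hs0).2 y h.le
      linarith
    have h2 : dist (f x) (f y) ≤ M * dist x.1 y.1 := hM x y hd
    have h3 : a * dist x.1 y.1 ≤ N (x.1 - y.1) := by rw [dist_eq_norm]; exact (hN _).1
    have h4 : M * dist x.1 y.1 ≤ max M 1 * dist x.1 y.1 :=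
      mul_le_mul_of_nonneg_right (le_max_left _ _) dist_nonneg
    have h5 : max M 1 * (a * dist x.1 y.1) ≤ max M 1 * N (x.1 - y.1) :=
      mul_le_mul_of_nonneg_left h3 (by positivity)
    rw [div_mul_eq_mul_div, le_div_iff₀ ha]
    nlinarith
  obtain ⟨t, ht⟩ : ∃ t, t = min 2 (c / (M * b)) := ⟨_, rfl⟩
  have ht0 : 0 < t := by rw [ht]; positivity
  have ht2 : t ≤ 2 := ht ▸ min_le_left _ _
  have htM : t * (M * b) ≤ c := by
    rw [← le_div_iff₀ (by positivity)]; exact ht ▸ min_le_right _ _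
  have hβt := hβ t ht0 ht2
  obtain ⟨q, hq1, hq⟩ : ∃ q, q < 1 ∧ max (1 - rolewiczModN N t) 0 < q := by
    obtain ⟨q, h1, h2⟩ := exists_between (show max (1 - rolewiczModN N t) 0 < 1 from
      max_lt (by linarith) one_pos)
    exact ⟨q, h2, h1⟩
  have hq0 : 0 < q := lt_of_le_of_lt (le_max_right _ _) hq
  have hqβ : 1 - rolewiczModN N t < q := lt_of_le_of_lt (le_max_left _ _) hq
  have hneg : ∀ y, N (-y) = N y := fun y => by
    have := hsm (-1) y
    simpa using this
  have hsymm : ∀ x y, N (x - y) = N (y - x) := fun x y => by rw [← hneg, neg_sub]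
  have key : ∀ k : ℕ, ∀ (s : List ℕ) (x : Z), f x = treeP c s → ∀ n : ℕ,
      ∃ (u : List ℕ) (w : Z), u.length + 1 = 2 ^ k ∧ f w = treeP c (u ++ n :: s) ∧
        N (x.1 - w.1) ≤ 2 ^ k * q ^ k * b := by
    intro k
    induction k with
    | zero =>
      intro s x hx n
      obtain ⟨w, hw1, hw2⟩ := (hf x 1 one_pos).1 (treeP c (n :: s)) (by
        rw [hx, ← hc]; exact treeP_child c hcpos.le s n)
      refine ⟨[], w, by simp, by simpa using hw2, ?_⟩
      have h1 := (hN (x.1 - w.1)).2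
      have hw1 : dist x.1 w.1 ≤ 1 := hw1
      rw [dist_eq_norm] at hw1
      simp only [pow_zero, one_mul]
      nlinarith
    | succ k ih =>
      intro s x hx n
      obtain ⟨u, z, hu, hz, hxz⟩ := ih s x hx n
      choose v w hv hw hzw using ih (u ++ n :: s) z hz
      obtain ⟨i, hi⟩ := beta_fork hadd hsm h0 (D := 2 ^ k * q ^ k * b) (by positivity) hqβ
        x.1 z.1 (fun i => (w i).1) hxz (fun i => by rw [hsymm]; exact hzw i) (by
          intro i j hij
          have h1 := treeP_sep c (u ++ n :: s) (v i) (v j ++ j :: (u ++ n :: s)) i (by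
            intro h
            have h2 : (j :: (u ++ n :: s)) <:+ v j ++ j :: (u ++ n :: s) := List.suffix_append _ _
            have h3 := (List.suffix_of_suffix_length_le h h2 (by simp)).eq_of_length (by simp)
            exact hij (List.cons.inj h3).1)
          rw [← hw, ← hw] at h1
          have h4 : ((v i).length : ℝ) + 1 = 2 ^ k := by exact_mod_cast hv i
          rw [h4] at h1
          have h5 : (1:ℝ) ≤ 2 ^ k := one_le_pow₀ (by norm_num)
          have h6 := hMf (w i) (w j) (by nlinarith)
          have h7 : q ^ k ≤ 1 := pow_le_one₀ hq0.le hq1.le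
          have h8 : c * 2 ^ k ≤ M * N ((w i).1 - (w j).1) := h1.trans h6
          have h9 : M * (t * (2 ^ k * q ^ k * b)) ≤ c * 2 ^ k := by
            calc M * (t * (2 ^ k * q ^ k * b)) = (t * (M * b)) * 2 ^ k * q ^ k := by ring
              _ ≤ (t * (M * b)) * 2 ^ k * 1 := by gcongr
              _ ≤ c * 2 ^ k := by rw [mul_one]; gcongr
          exact le_of_mul_le_mul_left (h9.trans h8) hM)
      refine ⟨v i ++ i :: u, w i, ?_, ?_, ?_⟩
      · have := hv i
        simp only [List.length_append, List.length_cons]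
        rw [pow_succ]
        omega
      · rw [hw]; simp
      · refine hi.trans (le_of_eq ?_)
        ring
  obtain ⟨x, hx⟩ := hsurj (treeP c [])
  obtain ⟨k, hk⟩ := exists_pow_lt_of_lt_one (show 0 < c / (M * b) by positivity) hq1
  rw [lt_div_iff₀ (by positivity)] at hk
  obtain ⟨u, w, hu, hw, hxw⟩ := key k [] x hx 0
  have h1 := treeP_sep c [] u [] 0 (by simp)
  rw [← hw, ← hx] at h1
  have h4 : (u.length : ℝ) + 1 = 2 ^ k := by exact_mod_cast hu
  rw [h4] at h1
  have h5 : (1:ℝ) ≤ 2 ^ k := one_le_pow₀ (by norm_num)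
  have h6 := hMf w x (by nlinarith)
  rw [hsymm] at h6
  have h7 : M * N (x.1 - w.1) ≤ M * (2 ^ k * q ^ k * b) := mul_le_mul_of_nonneg_left hxw hM.le
  have h8 : (q ^ k * (M * b)) * 2 ^ k < c * 2 ^ k := by gcongr
  nlinarith

end
end

section
/- Let X and Y be metric spaces, let f : X → Y be a surjective coarse quotient map with constant K ≥ 0, assume Y is metrically convex, and let S ⊆ Y. Then there exist a subset Z ⊆ X and a map g : Z → S onto S such that: (i) if K = 0, then for every ε > 0 there exists c₁ = c₁(ε) > 0 such that for all x ∈ Z and r ≥ ε, B_S(g(x), r) ⊆ g(B_Z(x, c₁·r)); (ii) if K > 0, then there exists c₂ = c₂(K) > 0 such that for all x ∈ Z and r > 0, B_S(g(x), r) ⊆ (g(B_Z(x, c₂·r)))^{4K}. -/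
open Set Function Filter

open scoped ENNReal

attribute [local instance] Classical.propDecidable

noncomputable section

def CoarseQuotientMap {α β : Type*} (dα : α → α → ℝ) (dβ : β → β → ℝ) (f : α → β)
    (K : ℝ) : Prop :=
  Function.Surjective f ∧
  (∀ t : ℝ, 0 < t → ∃ B : ℝ, ∀ a b : α, dα a b ≤ t → dβ (f a) (f b) ≤ B) ∧
  (∀ ε : ℝ, 0 < ε → ∃ δ : ℝ, 0 < δ ∧ ∀ (x : α) (y : β), dβ (f x) y ≤ ε →
    ∃ a : α, dα x a ≤ δ ∧ dβ (f a) y ≤ K)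

def expMod1 {α β : Type*} (dα : α → α → ℝ) (dβ : β → β → ℝ) (f : α → β) : ℝ :=
  sSup {d : ℝ | ∃ a b : α, dα a b ≤ 1 ∧ d = dβ (f a) (f b)}

theorem chain_aux {X Y : Type*} [MetricSpace X] [MetricSpace Y] (f : X → Y) (K η δ : ℝ)
    (hK : 0 ≤ K) (hη : 0 < η) (hδ : 0 < δ)
    (h : ∀ (x : X) (y : Y), dist (f x) y ≤ η + K → ∃ a : X, dist x a ≤ δ ∧ dist (f a) y ≤ K)
    (hconv : ∀ (y₀ y₁ : Y) (t : ℝ), 0 < t → t < 1 →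
      ∃ yt : Y, dist y₀ yt = t * dist y₀ y₁ ∧ dist y₁ yt = (1 - t) * dist y₀ y₁)
    (y : Y) (n : ℕ) : ∀ x : X, dist (f x) y ≤ n * η + K →
      ∃ z : X, dist x z ≤ n * δ ∧ dist (f z) y ≤ K := by
  induction n with
  | zero => intro x hx; exact ⟨x, by simp, by simpa using hx⟩
  | succ n ih =>
    intro x hx
    push_cast at hx ⊢
    have hn : (0 : ℝ) ≤ n * δ := by positivity
    by_cases hD : dist (f x) y ≤ η + K
    · obtain ⟨a, h1, h2⟩ := h x y hD
      exact ⟨a, by linarith, h2⟩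
    · push Not at hD
      have hD0 : 0 < dist (f x) y := by linarith
      obtain ⟨w, h1, h2⟩ := hconv (f x) y ((η + K) / dist (f x) y) (by positivity)
        ((div_lt_one hD0).2 hD)
      rw [div_mul_cancel₀ _ hD0.ne'] at h1
      rw [sub_mul, div_mul_cancel₀ _ hD0.ne'] at h2
      obtain ⟨a, h3, h4⟩ := h x w h1.le
      have h5 := dist_triangle (f a) w y
      rw [dist_comm w y] at h5
      obtain ⟨z, h6, h7⟩ := ih a (by linarith)
      exact ⟨z, by linarith [dist_triangle x a z], h7⟩

/-- Lemma 4.13: a subset of a coarse quotient is a coarse quotient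
of a subset: if `f : X → Y` is a surjective coarse quotient map with constant `K`,
`Y` is metrically convex and `S ⊆ Y`, there are `Z ⊆ X` and `g : Z → S` onto `S`
such that (i) if `K = 0` then for every `ε > 0` there is `c₁ > 0` with
`B_S(g x, r) ⊆ g(B_Z(x, c₁ r))` for `r ≥ ε`, and (ii) if `K > 0` there is
`c₂ > 0` with `B_S(g x, r) ⊆ (g(B_Z(x, c₂ r)))^{4K}` for all `r > 0`. -/
theorem coarse_subquotient_lemma
    {X Y : Type*} [MetricSpace X] [MetricSpace Y] (f : X → Y) (K : ℝ) (hK : 0 ≤ K)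
    (hf : CoarseQuotientMap (fun a b : X => dist a b) (fun a b : Y => dist a b) f K)
    (hconv : ∀ (y₀ y₁ : Y) (t : ℝ), 0 < t → t < 1 →
      ∃ yt : Y, dist y₀ yt = t * dist y₀ y₁ ∧ dist y₁ yt = (1 - t) * dist y₀ y₁)
    (S : Set Y) :
    ∃ (Z : Set X) (g : Z → S), Function.Surjective g ∧
      (K = 0 → ∀ ε : ℝ, 0 < ε → ∃ c₁ : ℝ, 0 < c₁ ∧
        ∀ (x : Z) (r : ℝ), ε ≤ r → ∀ y : S, dist (g x).1 y.1 ≤ r →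
          ∃ z : Z, dist x.1 z.1 ≤ c₁ * r ∧ g z = y) ∧
      (0 < K → ∃ c₂ : ℝ, 0 < c₂ ∧
        ∀ (x : Z) (r : ℝ), 0 < r → ∀ y : S, dist (g x).1 y.1 ≤ r →
          ∃ z : Z, dist x.1 z.1 ≤ c₂ * r ∧ dist (g z).1 y.1 ≤ 4 * K) := by
  obtain ⟨hsurj, -, hco⟩ := hf
  have hex : ∀ x : {x : X | ∃ s ∈ S, dist (f x) s ≤ K}, ∃ s : S, dist (f x.1) s.1 ≤ K ∧
      (f x.1 ∈ S → s.1 = f x.1) := by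
    rintro ⟨x, s, hs, hd⟩
    by_cases hx : f x ∈ S
    · exact ⟨⟨f x, hx⟩, by simpa using hK, fun _ => rfl⟩
    · exact ⟨⟨s, hs⟩, hd, fun h => absurd h hx⟩
  choose g hg1 hg2 using hex
  have key : ∀ η : ℝ, 0 < η → ∃ c : ℝ, 0 < c ∧
      ∀ (x : {x : X | ∃ s ∈ S, dist (f x) s ≤ K}) (r : ℝ), η ≤ r → ∀ y : S,
        dist (g x).1 y.1 ≤ r →
        ∃ z : {x : X | ∃ s ∈ S, dist (f x) s ≤ K}, dist x.1 z.1 ≤ c * r ∧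
          dist (f z.1) y.1 ≤ K := by
    intro η hη
    obtain ⟨δ, hδ, h⟩ := hco (η + K) (by linarith)
    refine ⟨2 * δ / η, by positivity, fun x r hr y hy => ?_⟩
    have h0 : 1 ≤ r / η := (one_le_div hη).2 hr
    have hn1 : r / η ≤ (⌈r / η⌉₊ : ℝ) := Nat.le_ceil _
    have hn2 := Nat.ceil_lt_add_one (zero_le_one.trans h0)
    rw [div_le_iff₀ hη] at hn1
    obtain ⟨z, h1, h2⟩ := chain_aux f K η δ hK hη hδ h hconv y.1 ⌈r / η⌉₊ x.1
      (by linarith [dist_triangle (f x.1) (g x).1 y.1, hg1 x])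
    refine ⟨⟨z, y.1, y.2, h2⟩, h1.trans ?_, h2⟩
    calc (⌈r / η⌉₊ : ℝ) * δ ≤ (2 * (r / η)) * δ := by gcongr; linarith
      _ = 2 * δ / η * r := by ring
  refine ⟨{x : X | ∃ s ∈ S, dist (f x) s ≤ K}, g, ?_, ?_, ?_⟩
  · intro s
    obtain ⟨x, hx⟩ := hsurj s.1
    refine ⟨⟨x, s.1, s.2, by simpa [hx] using hK⟩, Subtype.ext ?_⟩
    rw [hg2 _ (by simp [hx])]
    exact hx
  · intro hK0 ε hε
    obtain ⟨c, hc, h⟩ := key ε hε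
    refine ⟨c, hc, fun x r hr y hy => ?_⟩
    obtain ⟨z, h1, h2⟩ := h x r hr y hy
    refine ⟨z, h1, Subtype.ext ?_⟩
    have e : f z.1 = y.1 := dist_le_zero.1 (hK0 ▸ h2)
    rw [hg2 z (e ▸ y.2), e]
  · intro hK0
    obtain ⟨c, hc, h⟩ := key K hK0
    refine ⟨c, hc, fun x r hr y hy => ?_⟩
    by_cases hrK : K ≤ r
    · obtain ⟨z, h1, h2⟩ := h x r hrK y hy
      refine ⟨z, h1, ?_⟩
      have := dist_triangle_left (g z).1 y.1 (f z.1)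
      linarith [hg1 z]
    · exact ⟨x, by rw [dist_self]; positivity, by linarith⟩

end
end

section
/- Let X and Y be real Banach spaces, let Z ⊆ X, and let f : Z → Y be a surjective coarse quotient map with constant K ≥ 0 that is Lipschitz for large distances. Let k be the smallest positive integer with 2^k > ω_f(1) + 4K + 1. Then there exists a constant A ∈ (0,∞), depending only on f and K, such that qc_X(T^ω_{2^n}) ≤ A·qc_Y(T^ω_{2^{n+k}}) for every n ∈ ℕ. -/
open Set Function Filter

open scoped ENNReal

attribute [local instance] Classical.propDecidable

noncomputable section

def lcpLen : List ℕ → List ℕ → ℕ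
  | a :: x, b :: y => if a = b then lcpLen x y + 1 else 0
  | _, _ => 0

def treeDist (x y : List ℕ) : ℝ :=
  (x.length : ℝ) + (y.length : ℝ) - 2 * (lcpLen x y : ℝ)

def TreeOmega (h : ℕ) : Type := {x : List ℕ // x.length ≤ h}

def tDist (h : ℕ) : TreeOmega h → TreeOmega h → ℝ := fun x y => treeDist x.1 y.1

/-- Replace every letter of a word by `N` copies of it. -/
def repList (N : ℕ) : List ℕ → List ℕ
  | [] => []
  | a :: x => List.replicate N a ++ repList N x

theorem repList_length (N : ℕ) (x : List ℕ) : (repList N x).length = N * x.length := by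
  induction x with
  | nil => simp [repList]
  | cons a x ih => simp [repList, ih]; ring

theorem lcpLen_replicate_append (N a : ℕ) (u v : List ℕ) :
    lcpLen (List.replicate N a ++ u) (List.replicate N a ++ v) = N + lcpLen u v := by
  induction N with
  | zero => simp
  | succ N ih => simp [List.replicate_succ, lcpLen, ih]; ring

theorem lcpLen_nil_left (x : List ℕ) : lcpLen [] x = 0 := by
  cases x <;> simp [lcpLen]

theorem lcpLen_nil_right (x : List ℕ) : lcpLen x [] = 0 := by
  cases x <;> simp [lcpLen]

theorem lcpLen_repList (N : ℕ) (hN : 0 < N) (x y : List ℕ) :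
    lcpLen (repList N x) (repList N y) = N * lcpLen x y := by
  induction x generalizing y with
  | nil => simp [repList, lcpLen_nil_left]
  | cons a x ih =>
    cases y with
    | nil => simp [repList, lcpLen_nil_right]
    | cons b y =>
      by_cases h : a = b
      · subst h
        simp only [repList, lcpLen_replicate_append, ih, lcpLen, if_true]
        ring
      · obtain ⟨m, rfl⟩ : ∃ m, N = m + 1 := ⟨N - 1, by omega⟩
        simp [repList, List.replicate_succ, lcpLen, h]

theorem lcpLen_le_left (x y : List ℕ) : lcpLen x y ≤ x.length := by
  induction x generalizing y with
  | nil => simp [lcpLen_nil_left]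
  | cons a x ih =>
    cases y with
    | nil => simp [lcpLen_nil_right]
    | cons b y =>
      have := ih y
      simp only [lcpLen, List.length_cons]
      split <;> omega

theorem lcpLen_le_right (x y : List ℕ) : lcpLen x y ≤ y.length := by
  induction x generalizing y with
  | nil => simp [lcpLen_nil_left]
  | cons a x ih =>
    cases y with
    | nil => simp [lcpLen_nil_right]
    | cons b y =>
      have := ih y
      simp only [lcpLen, List.length_cons]
      split <;> omega

theorem eq_of_lcpLen (x y : List ℕ) (h : x.length + y.length ≤ 2 * lcpLen x y) : x = y := by
  induction x generalizing y with
  | nil =>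
    simp [lcpLen_nil_left] at h
    exact h.symm
  | cons a x ih =>
    cases y with
    | nil => simp [lcpLen_nil_right] at h
    | cons b y =>
      simp only [lcpLen, List.length_cons] at h
      split at h
      · rename_i hab
        rw [hab, ih y (by omega)]
      · omega

theorem treeDist_repList (N : ℕ) (hN : 0 < N) (x y : List ℕ) :
    treeDist (repList N x) (repList N y) = N * treeDist x y := by
  simp only [treeDist, repList_length, lcpLen_repList N hN]
  push_cast
  ring

theorem treeDist_self (x : List ℕ) : treeDist x x = 0 := by
  have : lcpLen x x = x.length := by
    induction x with
    | nil => rfl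
    | cons a x ih => simp [lcpLen, ih]
  simp only [treeDist, this]
  ring

theorem eq_of_treeDist_lt (x y : List ℕ) (h : treeDist x y < 1) : x = y := by
  apply eq_of_lcpLen
  unfold treeDist at h
  have : ((x.length + y.length : ℕ) : ℝ) < ((2 * lcpLen x y + 1 : ℕ) : ℝ) := by
    push_cast; linarith
  have := Nat.cast_lt.mp this
  omega

/-- Walk along a segment in `Y`, lifting to `Z` at unit steps. -/
theorem lift_walk {X Y : Type*} [NormedAddCommGroup X] [NormedAddCommGroup Y] [NormedSpace ℝ Y]
    {Z : Set X} (f : Z → Y) (K δ : ℝ) (hK : 0 ≤ K)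
    (hδ : ∀ (x : Z) (y : Y), dist (f x) y ≤ K + 1 → ∃ a : Z, dist x.1 a.1 ≤ δ ∧ dist (f a) y ≤ K)
    (m : ℕ) : ∀ (z : Z) (y : Y), dist (f z) y ≤ m →
      ∃ a : Z, dist z.1 a.1 ≤ δ * m ∧ dist (f a) y ≤ K := by
  suffices H : ∀ (z : Z) (p y : Y), dist (f z) p ≤ K → dist p y ≤ m →
      ∃ a : Z, dist z.1 a.1 ≤ δ * m ∧ dist (f a) y ≤ K by
    intro z y h
    exact H z (f z) y (by simpa using hK) h
  induction m with
  | zero =>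
    intro z p y h1 h2
    have : p = y := dist_le_zero.mp (by simpa using h2)
    subst this
    exact ⟨z, by simp, h1⟩
  | succ m ih =>
    intro z p y h1 h2
    have hm : (0 : ℝ) < (m : ℝ) + 1 := by positivity
    push_cast at h2 ⊢
    set q : Y := AffineMap.lineMap p y (((m : ℝ) + 1)⁻¹) with hq
    have hpq : dist p q ≤ 1 := by
      rw [hq, dist_left_lineMap, Real.norm_of_nonneg (by positivity), inv_mul_le_iff₀ hm]
      linarith
    have hqy : dist q y ≤ m := by
      rw [hq, dist_lineMap_right, Real.norm_of_nonneg
        (by rw [sub_nonneg]; exact inv_le_one_of_one_le₀ (by linarith [Nat.cast_nonneg (α := ℝ) m]))]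
      have : 1 - ((m : ℝ) + 1)⁻¹ = m * ((m : ℝ) + 1)⁻¹ := by field_simp; ring
      rw [this, mul_assoc]
      have : ((m : ℝ) + 1)⁻¹ * dist p y ≤ 1 := by
        rw [inv_mul_le_iff₀ hm]; linarith
      nlinarith [Nat.cast_nonneg (α := ℝ) m]
    obtain ⟨b, hb1, hb2⟩ := hδ z q (by linarith [dist_triangle (f z) p q])
    obtain ⟨a, ha1, ha2⟩ := ih b q y hb2 hqy
    exact ⟨a, by linarith [dist_triangle z.1 b.1 a.1], ha2⟩

/-- Proposition 4.15: if a Banach space `Y` is a coarse quotient,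
with constant `K`, of a subset `Z` of a Banach space `X` via a map `f` Lipschitz
for large distances, and `k` is the smallest positive integer with
`2^k > ω_f(1) + 4K + 1`, then there is `A > 0` with
`qc_X(T^ω_{2^n}) ≤ A qc_Y(T^ω_{2^{n+k}})` for every `n`. -/
theorem coarse_quotient_tree_transfer
    (X : Type*) [NormedAddCommGroup X] [NormedSpace ℝ X] [CompleteSpace X]
    (Y : Type*) [NormedAddCommGroup Y] [NormedSpace ℝ Y] [CompleteSpace Y]
    (Z : Set X) (f : Z → Y) (K : ℝ) (hK : 0 ≤ K)
    (hf : CoarseQuotientMap (fun a b : Z => dist a.1 b.1) (fun a b : Y => dist a b) f K)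
    (hlip : LipLargeDist (fun a b : Z => dist a.1 b.1) (fun a b : Y => dist a b) f)
    (k : ℕ) (hk : 0 < k)
    (hk2 : expMod1 (fun a b : Z => dist a.1 b.1) (fun a b : Y => dist a b) f + 4 * K + 1 <
      (2 : ℝ) ^ k)
    (hkmin : ∀ j : ℕ, 0 < j →
      expMod1 (fun a b : Z => dist a.1 b.1) (fun a b : Y => dist a b) f + 4 * K + 1 <
        (2 : ℝ) ^ j → k ≤ j) :
    ∃ A : ℝ, 0 < A ∧ ∀ n : ℕ,
      qcDist X (TreeOmega (2 ^ n)) (tDist (2 ^ n)) ≤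
        ENNReal.ofReal A * qcDist Y (TreeOmega (2 ^ (n + k))) (tDist (2 ^ (n + k))) := by
  obtain ⟨hsurj, hcc, hco⟩ := hf
  obtain ⟨M, hM⟩ := hlip 1 one_pos
  obtain ⟨δ, hδ0, hδ⟩ := hco (K + 1) (by linarith)
  obtain ⟨B, hB⟩ := hcc 1 one_pos
  beta_reduce at hM hδ hB
  have hω : ∀ a b : Z, dist a.1 b.1 ≤ 1 → dist (f a) (f b) + 4 * K + 1 < (2 : ℝ) ^ k := by
    intro a b hab
    have : dist (f a) (f b) ≤
        expMod1 (fun a b : Z => dist a.1 b.1) (fun a b : Y => dist a b) f := by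
      apply le_csSup
      · refine ⟨B, ?_⟩
        rintro d ⟨a, b, h, rfl⟩
        exact hB a b h
      · exact ⟨a, b, hab, rfl⟩
    linarith
  have hwalk := lift_walk f K δ hK hδ
  set P : ℝ := (2 : ℝ) ^ k with hP
  have hP0 : 0 < P := by positivity
  have hNP : (((2 ^ k : ℕ)) : ℝ) = P := by rw [hP]; push_cast; rfl
  have hN0 : 0 < 2 ^ k := by positivity
  refine ⟨(|M| + 2 * K + 1) * (δ * (K + 1 + P)), by positivity, fun n => ?_⟩
  set A₁ : ℝ := |M| + 2 * K + 1 with hA1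
  have hA1pos : 0 < A₁ := by positivity
  set A₂ : ℝ := δ * (K + 1 + P) with hA2
  have hA2pos : 0 < A₂ := by positivity
  unfold qcDist
  rw [ENNReal.mul_iInf_of_ne (by simpa using mul_pos hA1pos hA2pos) ENNReal.ofReal_ne_top]
  refine le_iInf fun q => ?_
  rw [ENNReal.mul_iInf_of_ne (by simpa using mul_pos hA1pos hA2pos) ENNReal.ofReal_ne_top]
  refine le_iInf fun hq => ?_
  obtain ⟨W, g, L, C, hL, hC, ⟨gsurj, gL, gC⟩, rfl⟩ := hq
  rw [← ENNReal.ofReal_mul (by positivity)]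
  beta_reduce at gL gC
  -- Lipschitz bound
  have gL' : ∀ w w' : W, treeDist (g w).1 (g w').1 ≤ L * dist w.1 w'.1 := by
    intro w w'
    rcases eq_or_lt_of_le (dist_nonneg (x := w.1) (y := w'.1)) with h | h
    · have : w = w' := Subtype.ext (dist_eq_zero.mp h.symm)
      subst this
      rw [treeDist_self]; positivity
    · exact gL w w' _ h le_rfl
  have hnk : (2 : ℕ) ^ k * 2 ^ n = 2 ^ (n + k) := by rw [pow_add, mul_comm]
  let ψ : TreeOmega (2 ^ n) → TreeOmega (2 ^ (n + k)) := fun t =>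
    ⟨repList (2 ^ k) t.1, by
      rw [repList_length, ← hnk]; exact Nat.mul_le_mul_left _ t.2⟩
  have hψ : ∀ t t', treeDist (ψ t).1 (ψ t').1 = P * treeDist t.1 t'.1 := by
    intro t t'
    rw [← hNP]
    exact treeDist_repList _ hN0 _ _
  have hLC : 1 ≤ L * C := by
    obtain ⟨w, hw⟩ := gsurj ⟨[], by simp⟩
    have h1 : treeDist [] [0] = 1 := by simp [treeDist, lcpLen]
    obtain ⟨w', hw1, hw2⟩ := gC w ⟨[0], by simpa using Nat.one_le_two_pow⟩ C hC (by
      rw [hw, div_self hC.ne']; exact h1.le)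
    have := gL' w w'
    rw [hw, hw2] at this
    change treeDist [] [0] ≤ _ at this
    rw [h1] at this
    nlinarith
  -- equality of labels for nearby points
  have key : ∀ (w w' : W) (t t' : TreeOmega (2 ^ n)), g w = ψ t → g w' = ψ t' →
      dist (L • w.1) (L • w'.1) < P → t = t' := by
    intro w w' t t' h h' hd
    apply Subtype.ext
    apply eq_of_treeDist_lt
    have h1 := gL' w w'
    rw [h, h', hψ] at h1
    rw [dist_smul₀, Real.norm_of_nonneg hL.le] at hd
    by_contra hc
    push Not at hc
    nlinarith
  let S : Set X := {x | ∃ (hx : x ∈ Z) (t : TreeOmega (2 ^ n)) (w : W), g w = ψ t ∧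
    dist (f ⟨x, hx⟩) (L • w.1) ≤ K}
  have hS : ∀ s : S, ∃ (hx : s.1 ∈ Z) (t : TreeOmega (2 ^ n)) (w : W), g w = ψ t ∧
    dist (f ⟨s.1, hx⟩) (L • w.1) ≤ K := fun s => s.2
  choose hSZ h v hv1 hv2 using hS
  have h2K : 2 * K < P := by
    obtain ⟨z, _⟩ := hsurj 0
    have := hω z z (by simp)
    rw [dist_self] at this
    linarith
  have hlab : ∀ (s : S) (w : W) (t : TreeOmega (2 ^ n)), g w = ψ t →
      dist (f ⟨s.1, hSZ s⟩) (L • w.1) ≤ K → h s = t := by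
    intro s w t hw hd
    refine key (v s) w _ _ (hv1 s) hw ?_
    have := dist_triangle_left (L • (v s).1) (L • w.1) (f ⟨s.1, hSZ s⟩)
    linarith [hv2 s]
  have hmem : A₁ * (A₂ * (L * C)) ∈ qcSet X (TreeOmega (2 ^ n)) (tDist (2 ^ n)) := by
    refine ⟨S, h, A₁, A₂ * (L * C), hA1pos, by positivity, ⟨?_, ?_, ?_⟩, rfl⟩
    · intro t
      obtain ⟨w, hw⟩ := gsurj (ψ t)
      obtain ⟨z, hz⟩ := hsurj (L • w.1)
      have hd : dist (f z) (L • w.1) ≤ K := by rw [hz, dist_self]; exact hK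
      exact ⟨⟨z.1, z.2, t, w, hw, hd⟩, hlab _ w t hw hd⟩
    · intro s s' r hr hd
      change dist s.1 s'.1 ≤ r at hd
      change treeDist (h s).1 (h s').1 ≤ A₁ * r
      have htri : dist (L • (v s).1) (L • (v s').1) ≤
          dist (f ⟨s.1, hSZ s⟩) (f ⟨s'.1, hSZ s'⟩) + 2 * K := by
        have h1 := dist_triangle4 (L • (v s).1) (f ⟨s.1, hSZ s⟩)
          (f ⟨s'.1, hSZ s'⟩) (L • (v s').1)
        rw [dist_comm (L • (v s).1) (f ⟨s.1, hSZ s⟩)] at h1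
        linarith [hv2 s, hv2 s']
      rcases le_total (dist s.1 s'.1) 1 with hle | hge
      · have : h s = h s' := by
          refine key _ _ _ _ (hv1 s) (hv1 s') ?_
          have := hω ⟨s.1, hSZ s⟩ ⟨s'.1, hSZ s'⟩ hle
          linarith
        rw [this, treeDist_self]
        positivity
      · have h1 := hM ⟨s.1, hSZ s⟩ ⟨s'.1, hSZ s'⟩ hge
        have h2 := gL' (v s) (v s')
        rw [hv1, hv1, hψ] at h2
        rw [dist_smul₀, Real.norm_of_nonneg hL.le] at htri
        have hP1 : 1 ≤ P := one_le_pow₀ (by norm_num)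
        have h3 : M * dist s.1 s'.1 ≤ |M| * dist s.1 s'.1 :=
          mul_le_mul_of_nonneg_right (le_abs_self M) dist_nonneg
        have h4 : P * treeDist (h s).1 (h s').1 ≤ A₁ * dist s.1 s'.1 := by
          rw [hA1]; change _ ≤ M * dist s.1 s'.1 at h1
          nlinarith
        have h5 : A₁ * dist s.1 s'.1 ≤ A₁ * r := mul_le_mul_of_nonneg_left hd hA1pos.le
        by_contra hc
        push Not at hc
        have : 0 < A₁ * r := by positivity
        nlinarith
    · intro s t r hr hd
      change treeDist (h s).1 t.1 ≤ r / (A₂ * (L * C)) at hd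
      by_cases heq : h s = t
      · exact ⟨s, by simpa using hr.le, heq⟩
      have hm1 : 1 ≤ treeDist (h s).1 t.1 := by
        by_contra hc
        push Not at hc
        exact heq (Subtype.ext (eq_of_treeDist_lt _ _ hc))
      set m := treeDist (h s).1 t.1 with hm
      obtain ⟨w, hw1, hw2⟩ := gC (v s) (ψ t) (C * (P * m)) (by positivity) (by
        rw [hv1, mul_div_cancel_left₀ _ hC.ne']
        exact (hψ _ _).le)
      have hdist : dist (f ⟨s.1, hSZ s⟩) (L • w.1) ≤ K + L * C * (P * m) := by
        have h1 := dist_triangle (f ⟨s.1, hSZ s⟩) (L • (v s).1) (L • w.1)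
        rw [dist_smul₀, Real.norm_of_nonneg hL.le] at h1
        have h2 := mul_le_mul_of_nonneg_left hw1 hL.le
        linarith [hv2 s]
      obtain ⟨a, ha1, ha2⟩ := hwalk ⌈K + L * C * (P * m)⌉₊ ⟨s.1, hSZ s⟩ (L • w.1)
        (hdist.trans (Nat.le_ceil _))
      have hceil := (Nat.ceil_lt_add_one (a := K + L * C * (P * m)) (by positivity)).le
      refine ⟨⟨a.1, a.2, t, w, hw2, ha2⟩, ?_, hlab _ w t hw2 ha2⟩
      change dist s.1 a.1 ≤ r
      rw [le_div_iff₀ (by positivity)] at hd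
      refine le_trans (ha1.trans ?_) hd
      refine (mul_le_mul_of_nonneg_left hceil hδ0.le).trans ?_
      have h1 : 1 ≤ m * (L * C) := one_le_mul_of_one_le_of_one_le hm1 hLC
      have h2 : (K + 1) * 1 ≤ (K + 1) * (m * (L * C)) :=
        mul_le_mul_of_nonneg_left h1 (by linarith)
      calc δ * (K + L * C * (P * m) + 1) ≤ δ * ((K + 1) * (m * (L * C)) + L * C * (P * m)) :=
            mul_le_mul_of_nonneg_left (by linarith) hδ0.le
        _ = m * (A₂ * (L * C)) := by rw [hA2]; ring
  refine (iInf₂_le _ hmem).trans (le_of_eq ?_)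
  rw [mul_assoc A₁ A₂]

end
end
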